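/- There exist x₀ ≥ 0 and λ₀ ≥ 0, depending only on V, and a jointly smooth function f₁ : ℝ × ℝ → ℂ² such that: (i) for every λ ∈ ℝ, f₁(·,λ) and f₂(·,λ) := the componentwise complex conjugate of f₁(·,λ) are solutions of ℋf = (1+λ²)f; (ii) for all integers k, ℓ ≥ 0 there is C_{k,ℓ} with |∂_λ^ℓ ∂ₓ^k (e^(−iλx) f₁(x,λ) − (1,0))| ≤ C_{k,ℓ} μ^(−1+k) (1+x)^ℓ e^(−γx) for all λ ∈ ℝ and all x ≥ x₀; and (iii) the same bounds hold for all x ≥ 0 whenever |λ| ≥ λ₀. -/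

import Mathlib

noncomputable section

open Real MeasureTheory

/-- The matrix Schrödinger operator `ℋ` acting on `f = (f₁, f₂) : ℝ → ℂ²`:
`ℋf = (−f₁'' + f₁ + V₁f₁ + V₂f₂, f₂'' − f₂ − V₂f₁ − V₁f₂)`. -/
def matH (V₁ V₂ : ℝ → ℝ) (f : ℝ → ℂ × ℂ) (x : ℝ) : ℂ × ℂ :=
  (-(iteratedDeriv 2 (fun y => (f y).1) x) + (f x).1
      + (V₁ x : ℂ) * (f x).1 + (V₂ x : ℂ) * (f x).2,
    iteratedDeriv 2 (fun y => (f y).2) x - (f x).2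
      - (V₂ x : ℂ) * (f x).1 - (V₁ x : ℂ) * (f x).2)

/-- `f` is a (classical, twice continuously differentiable) solution of `ℋf = z f`. -/
def IsSolution (V₁ V₂ : ℝ → ℝ) (z : ℂ) (f : ℝ → ℂ × ℂ) : Prop :=
  ContDiff ℝ 2 f ∧ ∀ x : ℝ, matH V₁ V₂ f x = z • f x

/-- The potentials `V₁, V₂` are smooth, even, and exponentially decaying with rate `γ ∈ (0,1)`,
together with all derivatives. -/
def PotentialHyp (γ : ℝ) (V₁ V₂ : ℝ → ℝ) : Prop :=
  0 < γ ∧ γ < 1 ∧ ContDiff ℝ (⊤ : ℕ∞) V₁ ∧ ContDiff ℝ (⊤ : ℕ∞) V₂ ∧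
    (∀ x, V₁ (-x) = V₁ x) ∧ (∀ x, V₂ (-x) = V₂ x) ∧
    ∀ k : ℕ, ∃ C : ℝ, ∀ x : ℝ,
      |iteratedDeriv k V₁ x| + |iteratedDeriv k V₂ x| ≤ C * Real.exp (-γ * |x|)

/-- `μ(λ) = √(λ² + 2)`. -/
def mu (lam : ℝ) : ℝ := Real.sqrt (lam ^ 2 + 2)

/-- Componentwise complex conjugation of a `ℂ²`-valued function. -/
def conj2 (f : ℝ → ℂ × ℂ) : ℝ → ℂ × ℂ :=
  fun x => (starRingEnd ℂ (f x).1, starRingEnd ℂ (f x).2)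

/-!
Write `f₁(x, λ) = e^{iλx} w(x, λ)` and let the spectral parameter `z = λ` range over a complex
strip. The amplitude `w` solves `w = (1, 0) + R_z (V w)`, where `R_z` inverts the free equation
with characteristic exponents `0`, `2iz`, `iz - r`, `iz + r`, `r = √(z² + 2)`. The last exponent
is too large to be integrated against `e^{-γx}` from `+∞`, so it is integrated from a base point
`x₀`. On `[x₀, ∞)` the operator `R_z` gains a factor `1 / (1 + |z|)`, so `R_z V` is a contraction
on the whole strip if `x₀` is large and, already with `x₀ = 0`, for `|Re z|` large; an
exponentially growing weight to the left of `x₀` makes it a contraction on the whole line.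

The fixed point is holomorphic in `z`. The equation bounds its `x`-derivatives at the cost of one
power of `z` each, and Cauchy's estimates on discs of fixed radius bound the `λ`-derivatives at no
cost. The families for the two base points are in general different, but for each `λ` both solve
the same linear equation with the same asymptotics at `+∞`, so they can be interpolated by a
smooth cutoff in `λ`.
-/

open Filter Set Topology
open scoped ContDiff

theorem tendstoLocallyUniformlyOn_of_norm_sub_le {α E : Type*} [TopologicalSpace α]
    [NormedAddCommGroup E] {s : Set α} {f : ℕ → α → E} {g : α → E} {b : α → ℝ} {u : ℕ → ℝ}
    (hb : ContinuousOn b s)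
    (hu : Tendsto u atTop (𝓝 0)) (h : ∀ n, ∀ a ∈ s, ‖f n a - g a‖ ≤ b a * u n) :
    TendstoLocallyUniformlyOn f g atTop s := by
  rw [Metric.tendstoLocallyUniformlyOn_iff]
  intro ε hε a ha
  refine ⟨s ∩ {y | |b y| < |b a| + 1}, inter_mem self_mem_nhdsWithin
    ((hb a ha).abs.eventually_lt_const (lt_add_one _)), ?_⟩
  have hlim : Tendsto (fun n => (|b a| + 1) * |u n|) atTop (𝓝 0) := by
    simpa using hu.abs.const_mul (|b a| + 1)
  filter_upwards [hlim.eventually_lt_const hε] with n hn y hy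
  rw [dist_eq_norm, norm_sub_rev]
  calc ‖f n y - g y‖ ≤ |b y * u n| := (h n y hy.1).trans (le_abs_self _)
    _ = |b y| * |u n| := abs_mul _ _
    _ ≤ (|b a| + 1) * |u n| := by gcongr; exact le_of_lt hy.2
    _ < ε := hn

theorem hasDerivAt_comp_ofReal {E : Type*} [NormedAddCommGroup E] [NormedSpace ℂ E] {f : ℂ → E}
    {f' : E} {t : ℝ} (hf : HasDerivAt f f' t) : HasDerivAt (fun s : ℝ => f s) f' t := by
  simpa [Function.comp_def] using hf.scomp t Complex.ofRealCLM.hasDerivAt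

section HolomorphicFamilies

variable {E F : Type*} [NormedAddCommGroup E] [NormedSpace ℂ E] [NormedAddCommGroup F]
  [NormedSpace ℂ F] {Ω : Set ℂ} {G H : ℝ → ℂ → E}

/-- A holomorphic family on `Ω`: a function of `x ∈ ℝ` and `z ∈ Ω` that is jointly continuous, and
holomorphic in `z` for every fixed `x`. Nothing is asked of its values at `z ∉ Ω`. -/
structure HolFamily (Ω : Set ℂ) (G : ℝ → ℂ → E) : Prop where
  continuousOn : ContinuousOn (fun q : ℝ × ℂ => G q.1 q.2) (univ ×ˢ Ω)
  differentiableOn : ∀ x, DifferentiableOn ℂ (G x) Ω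

namespace HolFamily

theorem of_differentiableOn {h : ℂ → E} (hh : DifferentiableOn ℂ h Ω) :
    HolFamily Ω (fun _ z => h z) :=
  ⟨hh.continuousOn.comp continuous_snd.continuousOn (fun _ hq => hq.2), fun _ => hh⟩

theorem of_continuous {h : ℝ → E} (hh : Continuous h) : HolFamily Ω (fun x _ => h x) :=
  ⟨(hh.comp continuous_fst).continuousOn, fun _ => differentiableOn_const _⟩

theorem add (hG : HolFamily Ω G) (hH : HolFamily Ω H) : HolFamily Ω (fun x z => G x z + H x z) :=
  ⟨hG.1.add hH.1, fun x => (hG.2 x).add (hH.2 x)⟩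

theorem sub (hG : HolFamily Ω G) (hH : HolFamily Ω H) : HolFamily Ω (fun x z => G x z - H x z) :=
  ⟨hG.1.sub hH.1, fun x => (hG.2 x).sub (hH.2 x)⟩

theorem smul {a : ℝ → ℂ → ℂ} (ha : HolFamily Ω a) (hG : HolFamily Ω G) :
    HolFamily Ω (fun x z => a x z • G x z) :=
  ⟨ha.1.smul hG.1, fun x => (ha.2 x).smul (hG.2 x)⟩

theorem clm_comp (L : E →L[ℂ] F) (hG : HolFamily Ω G) : HolFamily Ω (fun x z => L (G x z)) :=
  ⟨L.continuous.comp_continuousOn hG.1, fun x => L.differentiable.comp_differentiableOn (hG.2 x)⟩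

theorem prodMk {H : ℝ → ℂ → F} (hG : HolFamily Ω G) (hH : HolFamily Ω H) :
    HolFamily Ω (fun x z => (G x z, H x z)) :=
  ⟨hG.1.prodMk hH.1, fun x => (hG.2 x).prodMk (hH.2 x)⟩

theorem cexp {a : ℝ → ℂ → ℂ} (ha : HolFamily Ω a) :
    HolFamily Ω (fun x z => Complex.exp (a x z)) :=
  ⟨ha.1.cexp, fun x => (ha.2 x).cexp⟩

theorem congr (hG : HolFamily Ω G) (h : ∀ x, ∀ z ∈ Ω, H x z = G x z) : HolFamily Ω H :=
  ⟨hG.1.congr fun q hq => h q.1 q.2 hq.2, fun x => (hG.2 x).congr (h x)⟩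

theorem continuous (hG : HolFamily Ω G) {z : ℂ} (hz : z ∈ Ω) : Continuous (fun x => G x z) :=
  hG.1.comp_continuous (f := fun x : ℝ => (x, z)) (by fun_prop) (fun _ => ⟨trivial, hz⟩)

theorem of_tendsto [CompleteSpace E] (hΩ : IsOpen Ω) {f : ℕ → ℝ → ℂ → E} {b : ℝ → ℂ → ℝ}
    {u : ℕ → ℝ} (hf : ∀ n, HolFamily Ω (f n))
    (hb : ContinuousOn (fun q : ℝ × ℂ => b q.1 q.2) (univ ×ˢ Ω)) (hu : Tendsto u atTop (𝓝 0))
    (h : ∀ n x, ∀ z ∈ Ω, ‖f n x z - G x z‖ ≤ b x z * u n) : HolFamily Ω G where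
  continuousOn :=
    (tendstoLocallyUniformlyOn_of_norm_sub_le (f := fun n (q : ℝ × ℂ) => f n q.1 q.2) hb hu
      fun n q hq => h n q.1 q.2 hq.2).continuousOn (Frequently.of_forall fun n => (hf n).1)
  differentiableOn x :=
    (tendstoLocallyUniformlyOn_of_norm_sub_le (f := fun n z => f n x z)
      (hb.comp (f := fun z : ℂ => (x, z)) (by fun_prop) fun _ hz => ⟨trivial, hz⟩) hu
      fun n z hz => h n x z hz).differentiableOn (Eventually.of_forall fun n => (hf n).2 x) hΩ

theorem tendstoLocallyUniformlyOn_nhds (hG : HolFamily Ω G) (hΩ : IsOpen Ω) (x : ℝ) :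
    TendstoLocallyUniformlyOn G (G x) (𝓝 x) Ω := by
  rw [tendstoLocallyUniformlyOn_iff_forall_isCompact hΩ]
  intro K hKΩ hK
  rw [Metric.tendstoUniformlyOn_iff]
  intro ε hε
  obtain ⟨v, hv, hdist⟩ := hK.mem_uniformity_of_prod (f := G) (q := x) (s := univ)
    (hG.1.mono (prod_mono le_rfl hKΩ)) (mem_univ x) (Metric.dist_mem_uniformity hε)
  rw [nhdsWithin_univ] at hv
  filter_upwards [hv] with y hy w hw
  rw [dist_comm]
  exact hdist y hy w hw

theorem deriv [CompleteSpace E] (hG : HolFamily Ω G) (hΩ : IsOpen Ω) :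
    HolFamily Ω (fun x z => deriv (G x) z) := by
  have hd (x : ℝ) : DifferentiableOn ℂ (_root_.deriv (G x)) Ω := (hG.2 x).deriv hΩ
  refine ⟨?_, hd⟩
  rintro ⟨x, z⟩ ⟨-, hz⟩
  have hlim := (hG.tendstoLocallyUniformlyOn_nhds hΩ x).deriv (Eventually.of_forall hG.2) hΩ
  have hlim' : TendstoLocallyUniformlyOn (fun q : ℝ × ℂ => _root_.deriv (G q.1))
      (_root_.deriv (G x)) (𝓝 x ×ˢ 𝓝[Ω] z) Ω := by
    intro u hu w hw
    obtain ⟨t, ht, h⟩ := hlim u hu w hw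
    exact ⟨t, ht, tendsto_fst.eventually h⟩
  rw [ContinuousWithinAt, nhdsWithin_prod_eq, nhdsWithin_univ]
  exact hlim'.tendsto_comp ((hd x).continuousOn z hz) hz tendsto_snd

theorem exists_norm_le_on_closedBall (hG : HolFamily Ω G) (hΩ : IsOpen Ω) {z : ℂ} (hz : z ∈ Ω)
    (a b : ℝ) : ∃ r > 0, ∃ C, Metric.closedBall z r ⊆ Ω ∧
      ∀ x ∈ Icc a b, ∀ w ∈ Metric.closedBall z r, ‖G x w‖ ≤ C := by
  obtain ⟨r, hr, hsub⟩ := Metric.nhds_basis_closedBall.mem_iff.1 (hΩ.mem_nhds hz)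
  obtain ⟨C, hC⟩ := (isCompact_Icc.prod (isCompact_closedBall z r)).exists_bound_of_continuousOn
    (hG.1.mono (prod_mono (subset_univ (Icc a b)) hsub))
  exact ⟨r, hr, C, hsub, fun x hx w hw => hC (x, w) ⟨hx, hw⟩⟩

theorem hasDerivAt_intervalIntegral [CompleteSpace E] (hG : HolFamily Ω G) (hΩ : IsOpen Ω) {z : ℂ}
    (hz : z ∈ Ω) (a b : ℝ) :
    HasDerivAt (fun w => ∫ y in a..b, G y w) (∫ y in a..b, _root_.deriv (G y) z) z := by
  obtain ⟨r, hr, C, hsub, hC⟩ :=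
    (hG.deriv hΩ).exists_norm_le_on_closedBall hΩ hz (min a b) (max a b)
  refine (intervalIntegral.hasDerivAt_integral_of_dominated_loc_of_deriv_le
    (F := fun w y => G y w) (F' := fun w y => _root_.deriv (G y) w) (bound := fun _ => C)
    (Metric.closedBall_mem_nhds z hr) ?_ ?_ ?_ ?_ ?_ ?_).2
  · filter_upwards [hΩ.mem_nhds hz] with w hw
    exact (hG.continuous hw).aestronglyMeasurable
  · exact (hG.continuous hz).intervalIntegrable _ _
  · exact ((hG.deriv hΩ).continuous hz).aestronglyMeasurable
  · exact Eventually.of_forall fun t ht w hw => hC t (Ioc_subset_Icc_self ht) w hw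
  · exact intervalIntegrable_const
  · exact Eventually.of_forall fun t _ w hw =>
      ((hG.2 t).differentiableAt (hΩ.mem_nhds (hsub hw))).hasDerivAt

theorem intervalIntegral [CompleteSpace E] (hG : HolFamily Ω G) (hΩ : IsOpen Ω) (a : ℝ) :
    HolFamily Ω (fun x z => ∫ y in a..x, G y z) := by
  refine ⟨?_, fun x z hz =>
    (hG.hasDerivAt_intervalIntegral hΩ hz a x).differentiableAt.differentiableWithinAt⟩
  have hc : Continuous (Function.uncurry (fun (w : Ω) (y : ℝ) => G y w)) :=
    hG.1.comp_continuous (f := fun q : Ω × ℝ => (q.2, (q.1 : ℂ))) (by fun_prop)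
      (fun q => ⟨trivial, q.1.2⟩)
  rw [continuousOn_iff_continuous_domRestrict]
  exact (intervalIntegral.continuous_parametric_primitive_of_continuous (μ := volume)
    (a₀ := a) hc).comp (f := fun q : (univ ×ˢ Ω : Set (ℝ × ℂ)) => ((⟨q.1.2, q.2.2⟩ : Ω), q.1.1))
    (by fun_prop)

theorem hasDerivAt_intervalIntegral_right [CompleteSpace E] (hG : HolFamily Ω G) {z : ℂ}
    (hz : z ∈ Ω) (a x : ℝ) : HasDerivAt (fun x => ∫ y in a..x, G y z) (G x z) x :=
  (hG.continuous hz).integral_hasStrictDerivAt a x |>.hasDerivAt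

theorem hasDerivAt_deriv [CompleteSpace E] (hG : HolFamily Ω G) (hH : HolFamily Ω H)
    (hΩ : IsOpen Ω) (h : ∀ z ∈ Ω, ∀ x, HasDerivAt (fun x => G x z) (H x z) x) {z : ℂ} (hz : z ∈ Ω)
    (x : ℝ) : HasDerivAt (fun x => _root_.deriv (G x) z) (_root_.deriv (H x) z) x := by
  have hprim (x : ℝ) :
      _root_.deriv (G x) z = _root_.deriv (G 0) z + ∫ y in (0 : ℝ)..x, _root_.deriv (H y) z := by
    have hftc : G x =ᶠ[𝓝 z] fun w => G 0 w + ∫ y in (0 : ℝ)..x, H y w := by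
      filter_upwards [hΩ.mem_nhds hz] with w hw
      rw [intervalIntegral.integral_eq_sub_of_hasDerivAt (fun y _ => h w hw y)
        ((hH.continuous hw).intervalIntegrable _ _), add_sub_cancel]
    rw [hftc.deriv_eq]
    exact (((hG.2 0).differentiableAt (hΩ.mem_nhds hz)).hasDerivAt.add
      (hH.hasDerivAt_intervalIntegral hΩ hz 0 x)).deriv
  rw [funext hprim]
  exact ((hH.deriv hΩ).hasDerivAt_intervalIntegral_right hz 0 x).const_add _

end HolFamily

/-- `CnFamily Ω n g`: the family `g` is `n` times differentiable in `x`, and it and these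
derivatives are holomorphic families on `Ω`. -/
def CnFamily (Ω : Set ℂ) : ℕ → (ℝ → ℂ → E) → Prop
  | 0, g => HolFamily Ω g
  | n + 1, g => HolFamily Ω g ∧ ∃ g' : ℝ → ℂ → E,
      (∀ z ∈ Ω, ∀ x, HasDerivAt (fun x => g x z) (g' x z) x) ∧ CnFamily Ω n g'

namespace CnFamily

theorem holFamily {n : ℕ} (h : CnFamily Ω n G) : HolFamily Ω G := by
  cases n with
  | zero => exact h
  | succ n => exact h.1

theorem of_succ {n : ℕ} (h : CnFamily Ω (n + 1) G) : CnFamily Ω n G := by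
  induction n generalizing G with
  | zero => exact h.1
  | succ n ih =>
    obtain ⟨h, g', hd, hg'⟩ := h
    exact ⟨h, g', hd, ih hg'⟩

theorem deriv [CompleteSpace E] (hΩ : IsOpen Ω) {n : ℕ} (h : CnFamily Ω n G) :
    CnFamily Ω n (fun x z => deriv (G x) z) := by
  induction n generalizing G with
  | zero => exact HolFamily.deriv h hΩ
  | succ n ih =>
    obtain ⟨h, g', hd, hg'⟩ := h
    exact ⟨h.deriv hΩ, _, fun z hz x => h.hasDerivAt_deriv hg'.holFamily hΩ hd hz x, ih hg'⟩

theorem contDiffOn_ofReal [CompleteSpace E] (hΩ : IsOpen Ω) {n : ℕ} (h : CnFamily Ω n G) :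
    ContDiffOn ℝ n (fun p : ℝ × ℝ => G p.1 (p.2 : ℂ)) {p : ℝ × ℝ | (p.2 : ℂ) ∈ Ω} := by
  have hO : IsOpen {p : ℝ × ℝ | (p.2 : ℂ) ∈ Ω} := hΩ.preimage (by fun_prop)
  have hcont {g : ℝ → ℂ → E} (hg : HolFamily Ω g) :
      ContinuousOn (fun p : ℝ × ℝ => g p.1 (p.2 : ℂ)) {p : ℝ × ℝ | (p.2 : ℂ) ∈ Ω} :=
    hg.1.comp (f := fun p : ℝ × ℝ => (p.1, (p.2 : ℂ))) (by fun_prop) (fun p hp => ⟨trivial, hp⟩)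
  induction n generalizing G with
  | zero => simpa [contDiffOn_zero] using hcont h
  | succ n ih =>
    have hz : CnFamily Ω n (fun x z => _root_.deriv (G x) z) := h.of_succ.deriv hΩ
    obtain ⟨h, g', hd, hg'⟩ := h
    let span := ContinuousLinearMap.toSpanSingletonCLE (𝕜 := ℝ) (E := E)
    have hf (p : ℝ × ℝ) (hp : (p.2 : ℂ) ∈ Ω) : HasFDerivAt (fun p : ℝ × ℝ => G p.1 (p.2 : ℂ))
        ((span (g' p.1 p.2)).coprod (span (_root_.deriv (G p.1) p.2))) p := by
      refine (hasStrictFDerivAt_uncurry_coprod (𝕜 := ℝ) (u := p) (f := fun x (t : ℝ) => G x t)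
        (f₁ := fun x (t : ℝ) => span (g' x t)) (f₂ := fun x (t : ℝ) => span (_root_.deriv (G x) t))
        ?_ ?_ ?_ ?_).hasFDerivAt
      · filter_upwards [hO.mem_nhds hp] with v hv
        exact (hd v.2 hv v.1).hasFDerivAt
      · filter_upwards [hO.mem_nhds hp] with v hv
        exact (hasDerivAt_comp_ofReal
          ((h.2 v.1).differentiableAt (hΩ.mem_nhds hv)).hasDerivAt).hasFDerivAt
      · exact span.continuous.continuousAt.comp
          ((hcont hg'.holFamily).continuousAt (hO.mem_nhds hp))
      · exact span.continuous.continuousAt.comp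
          ((hcont hz.holFamily).continuousAt (hO.mem_nhds hp))
    push_cast
    rw [contDiffOn_succ_iff_fderiv_of_isOpen hO]
    refine ⟨fun p hp => (hf p hp).differentiableAt.differentiableWithinAt, by simp, ?_⟩
    exact ((ContinuousLinearMap.coprodEquivL (S := ℝ) (𝕜 := ℝ) (E := ℝ) (F := ℝ)
      (G := E)).contDiff.comp_contDiffOn ((span.contDiff.comp_contDiffOn (ih hg')).prodMk
        (span.contDiff.comp_contDiffOn (ih hz)))).congr fun p hp => (hf p hp).fderiv

end CnFamily

end HolomorphicFamilies

section ExponentialPrimitives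

variable {E : Type*} [NormedAddCommGroup E] [NormedSpace ℂ E]

/-- The solution of `y' = -c y + g` that vanishes at `a`. -/
def expPrimitive (a : ℝ) (c : ℂ) (g : ℝ → E) (x : ℝ) : E :=
  ∫ y in a..x, Complex.exp (c * (y - x)) • g y

/-- The solution of `y' = -c y + g` that vanishes at `+∞`; meaningful when `e^{c y} g(y)` is
integrable near `+∞`. -/
def expPrimitiveTop (c : ℂ) (g : ℝ → E) (x : ℝ) : E :=
  -∫ y in Ioi x, Complex.exp (c * (y - x)) • g y

variable {c : ℂ} {g h : ℝ → E} {a x x₀ γ δ ρ κ C : ℝ}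

theorem exp_mul_sub_smul (c : ℂ) (x y : ℝ) (v : E) : Complex.exp (c * (y - x)) • v =
    Complex.exp (-(c * x)) • Complex.exp (c * y) • v := by
  rw [smul_smul, ← Complex.exp_add]
  ring_nf

theorem expPrimitive_eq_smul : expPrimitive a c g x =
    Complex.exp (-(c * x)) • ∫ y in a..x, Complex.exp (c * y) • g y := by
  simp only [expPrimitive, exp_mul_sub_smul, intervalIntegral.integral_smul]

theorem expPrimitiveTop_eq_smul : expPrimitiveTop c g x =
    -(Complex.exp (-(c * x)) • ∫ y in Ioi x, Complex.exp (c * y) • g y) := by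
  simp only [expPrimitiveTop, exp_mul_sub_smul, integral_smul]

@[simp] theorem expPrimitive_self : expPrimitive a c g a = 0 := by simp [expPrimitive]

theorem norm_exp_mul_ofReal (c : ℂ) (x : ℝ) : ‖Complex.exp (c * x)‖ = rexp (c.re * x) := by
  simp [Complex.norm_exp]

theorem continuous_exp_mul_smul (hg : Continuous g) :
    Continuous fun y : ℝ => Complex.exp (c * y) • g y := by fun_prop

theorem hasDerivAt_exp_neg_mul_smul {y : ℝ → E} {y' : E}
    (hy : HasDerivAt y (Complex.exp (c * x) • y') x) :
    HasDerivAt (fun s : ℝ => Complex.exp (-(c * s)) • y s)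
      (-(c • Complex.exp (-(c * x)) • y x) + y') x := by
  have hexp : HasDerivAt (fun s : ℝ => Complex.exp (-(c * s))) (Complex.exp (-(c * x)) * -c) x := by
    simpa using (((hasDerivAt_id x).ofReal_comp.const_mul c).neg).cexp
  refine (hexp.smul hy).congr_deriv ?_
  rw [smul_smul, ← Complex.exp_add, neg_add_cancel, Complex.exp_zero, one_smul, smul_smul,
    add_comm, ← neg_smul]
  ring_nf

theorem hasDerivAt_expPrimitive [CompleteSpace E] (hg : Continuous g) :
    HasDerivAt (expPrimitive a c g) (-(c • expPrimitive a c g x) + g x) x := by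
  rw [funext fun x => expPrimitive_eq_smul (a := a) (c := c) (g := g) (x := x)]
  exact hasDerivAt_exp_neg_mul_smul
    ((continuous_exp_mul_smul hg).integral_hasStrictDerivAt a x).hasDerivAt

theorem expPrimitive_sub (hg : Continuous g) (hh : Continuous h) :
    expPrimitive a c (fun y => g y - h y) x = expPrimitive a c g x - expPrimitive a c h x := by
  simp only [expPrimitive, smul_sub]
  exact intervalIntegral.integral_sub (Continuous.intervalIntegrable (by fun_prop) _ _)
    (Continuous.intervalIntegrable (by fun_prop) _ _)

theorem hasDerivAt_exp_mul_sub_smul {y : ℝ → E} {v : E} {t : ℝ} (x : ℝ)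
    (hy : HasDerivAt y (-(c • y t) + v) t) :
    HasDerivAt (fun s => Complex.exp (c * ↑(s - x)) • y s) (Complex.exp (c * ↑(t - x)) • v) t := by
  have hexp : HasDerivAt (fun s : ℝ => Complex.exp (c * ↑(s - x)))
      (Complex.exp (c * ↑(t - x)) * c) t := by
    simpa using ((((hasDerivAt_id t).sub_const x).ofReal_comp).const_mul c).cexp
  refine (hexp.smul hy).congr_deriv ?_
  module

theorem norm_le_of_hasDerivAt_neg_smul_add {y : ℝ → E} (hax : a ≤ x) (hc : -c.re ≤ ρ) (hρ : ρ < κ)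
    (hy : ∀ t, HasDerivAt y (-(c • y t) + g t) t)
    (hg : ∀ t ∈ Icc a x, ‖g t‖ ≤ C * rexp (κ * (t - a))) :
    ‖y x‖ ≤ (‖y a‖ + C / (κ - ρ)) * rexp (κ * (x - a)) := by
  have hC : 0 ≤ C := by simpa using (norm_nonneg _).trans (hg a ⟨le_rfl, hax⟩)
  have hκρ : 0 < κ - ρ := sub_pos.2 hρ
  have hdecay (t : ℝ) (ht : t ≤ x) : ‖Complex.exp (c * ↑(t - x))‖ ≤ rexp (ρ * (x - t)) := by
    rw [norm_exp_mul_ofReal, exp_le_exp]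
    nlinarith
  let B (t : ℝ) : ℝ := rexp (κ * (x - a)) * ‖y a‖ + C / (κ - ρ) * rexp (κ * (t - a) + ρ * (x - t))
  have hB (t : ℝ) : HasDerivAt B (C * rexp (κ * (t - a) + ρ * (x - t))) t := by
    have hexp := ((((hasDerivAt_id t).sub_const a).const_mul κ).add
      (((hasDerivAt_id t).const_sub x).const_mul ρ)).exp
    refine ((hexp.const_mul (C / (κ - ρ))).const_add _).congr_deriv ?_
    simp only [id, Pi.add_apply]
    field_simp [hκρ.ne']
    ring
  have hz (t : ℝ) := hasDerivAt_exp_mul_sub_smul x (hy t)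
  have hBa : ‖Complex.exp (c * ↑(a - x)) • y a‖ ≤ B a := by
    have hexp : ‖Complex.exp (c * ↑(a - x))‖ ≤ rexp (κ * (x - a)) :=
      (hdecay a hax).trans (exp_le_exp.2 (mul_le_mul_of_nonneg_right hρ.le (sub_nonneg.2 hax)))
    rw [norm_smul]
    exact le_add_of_le_of_nonneg (mul_le_mul_of_nonneg_right hexp (norm_nonneg _)) (by positivity)
  have hderiv (t : ℝ) (ht : t ∈ Ico a x) : ‖Complex.exp (c * ↑(t - x)) • g t‖ ≤
      C * rexp (κ * (t - a) + ρ * (x - t)) := by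
    rw [norm_smul, exp_add, ← mul_assoc, mul_comm]
    exact mul_le_mul (hg t ⟨ht.1, ht.2.le⟩) (hdecay t ht.2.le) (norm_nonneg _) (by positivity)
  have hbound := image_norm_le_of_norm_deriv_right_le_deriv_boundary (a := a) (b := x) (B := B)
    (fun t _ => (hz t).continuousAt.continuousWithinAt) (fun t _ => (hz t).hasDerivWithinAt) hBa hB
    hderiv ⟨hax, le_rfl⟩
  simpa [B, mul_comm, mul_add, add_mul] using hbound

theorem norm_le_of_hasDerivAt_neg_smul_add_of_le {y : ℝ → E} (hxa : x ≤ a) (hc : c.re ≤ ρ)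
    (hρ : ρ < κ) (hy : ∀ t, HasDerivAt y (-(c • y t) + g t) t)
    (hg : ∀ t ∈ Icc x a, ‖g t‖ ≤ C * rexp (κ * (a - t))) :
    ‖y x‖ ≤ (‖y a‖ + C / (κ - ρ)) * rexp (κ * (a - x)) := by
  have hreflect (t : ℝ) :
      HasDerivAt (fun s => y (-s)) (-(-c • y (-t)) + -g (-t)) t := by
    refine ((hy (-t)).scomp t (hasDerivAt_neg t)).congr_deriv ?_
    rw [neg_one_smul, neg_add, neg_neg, neg_smul, neg_neg]
  have hbound := norm_le_of_hasDerivAt_neg_smul_add (y := fun s => y (-s)) (neg_le_neg hxa)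
    (by simpa using hc) hρ hreflect (C := C) fun t ht => by
      rw [norm_neg, sub_neg_eq_add, add_comm, ← sub_neg_eq_add]
      exact hg (-t) ⟨le_neg_of_le_neg ht.2, neg_le_of_neg_le ht.1⟩
  simpa [neg_add_eq_sub] using hbound

theorem norm_exp_mul_smul_le (hc : c.re ≤ δ) (hx : 0 ≤ x) (hgx : ‖g x‖ ≤ C * rexp (-γ * x)) :
    ‖Complex.exp (c * x) • g x‖ ≤ C * rexp (-(γ - δ) * x) := by
  rw [norm_smul, norm_exp_mul_ofReal]
  calc rexp (c.re * x) * ‖g x‖ ≤ rexp (δ * x) * (C * rexp (-γ * x)) := by gcongr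
    _ = C * rexp (-(γ - δ) * x) := by rw [mul_left_comm, ← exp_add]; ring_nf

theorem integrableOn_exp_mul_smul (hδ : δ < γ) (hc : c.re ≤ δ) (hg : Continuous g)
    (hgb : ∀ y, x₀ ≤ y → ‖g y‖ ≤ C * rexp (-γ * y)) (x : ℝ) :
    IntegrableOn (fun y : ℝ => Complex.exp (c * y) • g y) (Ioi x) := by
  have hexp : IntegrableOn (fun y => rexp (-(γ - δ) * y)) (Ioi 0) :=
    integrableOn_exp_mul_Ioi (neg_neg_of_pos (sub_pos.2 hδ)) 0
  have hO : (fun y : ℝ => Complex.exp (c * y) • g y) =O[atTop] fun y => rexp (-(γ - δ) * y) := by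
    refine Asymptotics.IsBigO.of_bound C (eventually_atTop.2 ⟨max x₀ 0, fun y hy => ?_⟩)
    rw [norm_of_nonneg (exp_pos _).le]
    exact norm_exp_mul_smul_le hc ((le_max_right _ _).trans hy)
      (hgb y ((le_max_left _ _).trans hy))
  exact (((continuous_exp_mul_smul hg).locallyIntegrable.locallyIntegrableOn
    _).integrableOn_of_isBigO_atTop hO ⟨_, Ioi_mem_atTop 0, hexp⟩).mono_set Ioi_subset_Ici_self

theorem norm_expPrimitiveTop_le (hδ : δ < γ) (hc : c.re ≤ δ)
    (hgb : ∀ y, x₀ ≤ y → ‖g y‖ ≤ C * rexp (-γ * y)) (hx : x₀ ≤ x) :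
    ‖expPrimitiveTop c g x‖ ≤ C / (γ - δ) * rexp (-γ * x) := by
  have hδγ : -(γ - δ) < 0 := neg_neg_of_pos (sub_pos.2 hδ)
  have hbound (y : ℝ) (hy : y ∈ Ioi x) : ‖Complex.exp (c * (y - x)) • g y‖ ≤
      C * rexp (-δ * x) * rexp (-(γ - δ) * y) := by
    have hy' : x < y := hy
    rw [← Complex.ofReal_sub, norm_smul, norm_exp_mul_ofReal]
    calc rexp (c.re * (y - x)) * ‖g y‖ ≤ rexp (δ * (y - x)) * (C * rexp (-γ * y)) := by
          gcongr
          exacts [hgb y (hx.trans hy'.le)]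
      _ = C * rexp (-δ * x) * rexp (-(γ - δ) * y) := by
          rw [mul_left_comm, mul_assoc, ← exp_add, ← exp_add]; ring_nf
  rw [expPrimitiveTop, norm_neg]
  refine (norm_integral_le_of_norm_le ((integrableOn_exp_mul_Ioi hδγ x).const_mul _)
    ((ae_restrict_iff' measurableSet_Ioi).2 (Eventually.of_forall hbound))).trans_eq ?_
  rw [integral_const_mul, integral_exp_mul_Ioi hδγ, neg_div_neg_eq, mul_div_assoc', mul_assoc,
    ← exp_add]
  ring_nf

theorem expPrimitiveTop_eq_add (hδ : δ < γ) (hc : c.re ≤ δ) (hg : Continuous g)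
    (hgb : ∀ y, x₀ ≤ y → ‖g y‖ ≤ C * rexp (-γ * y)) (b x : ℝ) :
    expPrimitiveTop c g x =
      Complex.exp (-(c * (x - b))) • expPrimitiveTop c g b + expPrimitive b c g x := by
  have hint := integrableOn_exp_mul_smul hδ hc hg hgb
  rw [expPrimitiveTop_eq_smul, expPrimitiveTop_eq_smul, expPrimitive_eq_smul,
    ← intervalIntegral.integral_interval_add_Ioi (hint x) (hint b),
    intervalIntegral.integral_symm b x, smul_neg, smul_smul, ← Complex.exp_add, smul_add, smul_neg]
  ring_nf
  abel

theorem hasDerivAt_expPrimitiveTop [CompleteSpace E] (hδ : δ < γ) (hc : c.re ≤ δ)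
    (hg : Continuous g) (hgb : ∀ y, x₀ ≤ y → ‖g y‖ ≤ C * rexp (-γ * y)) :
    HasDerivAt (expPrimitiveTop c g) (-(c • expPrimitiveTop c g x) + g x) x := by
  have hint := integrableOn_exp_mul_smul hδ hc hg hgb
  have heq : expPrimitiveTop c g = fun x : ℝ => Complex.exp (-(c * x)) •
      ((∫ y in (0 : ℝ)..x, Complex.exp (c * y) • g y) -
        ∫ y in Ioi (0 : ℝ), Complex.exp (c * y) • g y) := by
    funext x
    rw [expPrimitiveTop_eq_smul, ← intervalIntegral.integral_interval_add_Ioi (hint 0) (hint x),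
      ← smul_neg]
    abel_nf
  rw [heq]
  exact hasDerivAt_exp_neg_mul_smul
    (((continuous_exp_mul_smul hg).integral_hasStrictDerivAt 0 x).hasDerivAt.sub_const _)

theorem expPrimitiveTop_sub {C' : ℝ} (hδ : δ < γ) (hc : c.re ≤ δ)
    (hg : Continuous g) (hgb : ∀ y, x₀ ≤ y → ‖g y‖ ≤ C * rexp (-γ * y)) (hh : Continuous h)
    (hhb : ∀ y, x₀ ≤ y → ‖h y‖ ≤ C' * rexp (-γ * y)) :
    expPrimitiveTop c (fun y => g y - h y) x = expPrimitiveTop c g x - expPrimitiveTop c h x := by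
  simp only [expPrimitiveTop_eq_smul, smul_sub]
  rw [integral_sub (integrableOn_exp_mul_smul hδ hc hg hgb x)
    (integrableOn_exp_mul_smul hδ hc hh hhb x), smul_sub]
  abel

theorem smul_expPrimitiveTop_zero_expPrimitiveTop [CompleteSpace E] (hγ : 0 < γ)
    (hδ : δ < γ) (hc : c.re ≤ δ) (hg : Continuous g)
    (hgb : ∀ y, x₀ ≤ y → ‖g y‖ ≤ C * rexp (-γ * y)) :
    c • expPrimitiveTop 0 (expPrimitiveTop c g) x =
      expPrimitiveTop 0 g x - expPrimitiveTop c g x := by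
  set p := expPrimitiveTop c g
  have hderiv (y : ℝ) : HasDerivAt p (-(c • p y) + g y) y :=
    hasDerivAt_expPrimitiveTop hδ hc hg hgb
  have hpc : Continuous p := continuous_iff_continuousAt.2 fun y => (hderiv y).continuousAt
  have hpb (y : ℝ) (hy : x₀ ≤ y) : ‖p y‖ ≤ C / (γ - δ) * rexp (-γ * y) :=
    norm_expPrimitiveTop_le hδ hc hgb hy
  have hint {f : ℝ → E} {D : ℝ} (hf : Continuous f)
      (hfb : ∀ y, x₀ ≤ y → ‖f y‖ ≤ D * rexp (-γ * y)) : IntegrableOn f (Ioi x) := by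
    simpa using integrableOn_exp_mul_smul (c := 0) hγ (by simp) hf hfb x
  have hlim : Tendsto p atTop (𝓝 0) := by
    have hexp : Tendsto (fun y => C / (γ - δ) * rexp (-γ * y)) atTop (𝓝 0) := by
      simpa using (tendsto_exp_atBot.comp
        (tendsto_id.const_mul_atTop_of_neg (neg_neg_of_pos hγ))).const_mul (C / (γ - δ))
    exact squeeze_zero_norm' (eventually_atTop.2 ⟨x₀, hpb⟩) hexp
  have hftc := integral_Ioi_of_hasDerivAt_of_tendsto (a := x) hpc.continuousWithinAt
    (fun y _ => hderiv y) (((hint hpc hpb).smul c).neg.add (hint hg hgb)) hlim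
  have hsum := integral_add ((hint hpc hpb).smul c).neg (hint hg hgb)
  simp only [Pi.neg_apply, Pi.smul_apply, integral_neg, integral_smul] at hsum
  simp only [expPrimitiveTop, zero_mul, Complex.exp_zero, one_smul] at *
  rw [hsum] at hftc
  rw [smul_neg]
  linear_combination (norm := module) hftc

namespace HolFamily

variable [CompleteSpace E] {Ω : Set ℂ} {G : ℝ → ℂ → E} {c : ℂ → ℂ}

theorem exp_mul_ofReal (hc : DifferentiableOn ℂ c Ω) :
    HolFamily Ω (fun x z => Complex.exp (c z * x)) :=
  ((of_differentiableOn hc).smul (of_continuous Complex.continuous_ofReal)).cexp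

theorem expPrimitive (hG : HolFamily Ω G) (hΩ : IsOpen Ω) (hc : DifferentiableOn ℂ c Ω) (a : ℝ) :
    HolFamily Ω (fun x z => expPrimitive a (c z) (fun y => G y z) x) := by
  simp only [expPrimitive_eq_smul, ← neg_mul]
  exact (exp_mul_ofReal hc.neg).smul (((exp_mul_ofReal hc).smul hG).intervalIntegral hΩ a)

theorem expPrimitiveTop (hG : HolFamily Ω G) (hΩ : IsOpen Ω) (hc : DifferentiableOn ℂ c Ω)
    (hδ : δ < γ) (hcδ : ∀ z ∈ Ω, (c z).re ≤ δ)
    (hGb : ∀ y, x₀ ≤ y → ∀ z ∈ Ω, ‖G y z‖ ≤ C * rexp (-γ * y)) :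
    HolFamily Ω (fun x z => expPrimitiveTop (c z) (fun y => G y z) x) := by
  let a (n : ℕ) : ℝ := max x₀ 0 + n
  have ha (n : ℕ) : 0 ≤ a n := add_nonneg (le_max_right _ _) n.cast_nonneg
  have hax₀ (n : ℕ) : x₀ ≤ a n := (le_max_left _ _).trans (le_add_of_nonneg_right n.cast_nonneg)
  have hlim : Tendsto (fun n => rexp (-(γ - δ) * a n)) atTop (𝓝 0) :=
    tendsto_exp_atBot.comp ((tendsto_atTop_add_const_left _ _
      tendsto_natCast_atTop_atTop).const_mul_atTop_of_neg (neg_neg_of_pos (sub_pos.2 hδ)))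
  refine of_tendsto hΩ (fun n => hG.expPrimitive hΩ hc (a n))
    (b := fun x z => ‖Complex.exp (-c z * x)‖ * (C / (γ - δ))) (u := fun n => rexp (-(γ - δ) * a n))
    ((exp_mul_ofReal hc.neg).continuousOn.norm.mul_const _) hlim fun n x z hz => ?_
  have htail := norm_expPrimitiveTop_le hδ (hcδ z hz) (fun y hy => hGb y hy z hz) (hax₀ n)
  rw [expPrimitiveTop_eq_add hδ (hcδ z hz) (hG.continuous hz) (fun y hy => hGb y hy z hz) (a n) x,
    sub_add_cancel_right, norm_neg]
  have hsplit : Complex.exp (-(c z * (x - a n))) •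
      _root_.expPrimitiveTop (c z) (fun y => G y z) (a n) = Complex.exp (-c z * x) •
        Complex.exp (c z * a n) • _root_.expPrimitiveTop (c z) (fun y => G y z) (a n) := by
    rw [smul_smul, ← Complex.exp_add]
    ring_nf
  rw [hsplit, norm_smul, mul_assoc]
  exact mul_le_mul_of_nonneg_left (norm_exp_mul_smul_le (hcδ z hz) (ha n) htail) (norm_nonneg _)

end HolFamily

end ExponentialPrimitives

section FixedPoint

variable {E : Type*} [NormedAddCommGroup E] [NormedSpace ℂ E] {Ω : Set ℂ} {W : ℝ → ℂ → ℝ}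

theorem HolFamily.exists_limit_of_geometric [CompleteSpace E] (hΩ : IsOpen Ω)
    (hW : ContinuousOn (fun q : ℝ × ℂ => W q.1 q.2) (univ ×ˢ Ω)) {v : ℕ → ℝ → ℂ → E}
    (hv : ∀ n, HolFamily Ω (v n)) {M : ℝ}
    (hstep : ∀ n x, ∀ z ∈ Ω, ‖v (n + 1) x z - v n x z‖ ≤ M / 2 ^ n * W x z) :
    ∃ w, HolFamily Ω w ∧ ∀ n x, ∀ z ∈ Ω, ‖v n x z - w x z‖ ≤ 2 * M * W x z * (2 ^ n)⁻¹ := by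
  have hgeom (x : ℝ) (z : ℂ) (hz : z ∈ Ω) (n : ℕ) :
      dist (v n x z) (v (n + 1) x z) ≤ 2 * M * W x z / 2 / 2 ^ n := by
    rw [dist_comm, dist_eq_norm]
    exact (hstep n x z hz).trans_eq (by ring)
  have hdist (n : ℕ) (x : ℝ) (z : ℂ) (hz : z ∈ Ω) :
      ‖v n x z - limUnder atTop (fun n => v n x z)‖ ≤ 2 * M * W x z * (2 ^ n)⁻¹ := by
    rw [← dist_eq_norm, ← div_eq_mul_inv]
    exact dist_le_of_le_geometric_two_of_tendsto (hgeom x z hz)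
      (cauchySeq_of_le_geometric_two (hgeom x z hz)).tendsto_limUnder n
  have hpow : Tendsto (fun n : ℕ => ((2 : ℝ) ^ n)⁻¹) atTop (𝓝 0) :=
    (tendsto_pow_atTop_atTop_of_one_lt one_lt_two).inv_tendsto_atTop
  exact ⟨fun x z => limUnder atTop fun n => v n x z,
    .of_tendsto hΩ hv (hW.const_smul (2 * M)) hpow hdist, hdist⟩

/-- Holomorphic families on `Ω` bounded by a constant multiple of the weight `W`. -/
def WeightedHolFamily (Ω : Set ℂ) (W : ℝ → ℂ → ℝ) (v : ℝ → ℂ → E) : Prop :=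
  HolFamily Ω v ∧ ∃ M : ℝ, ∀ x, ∀ z ∈ Ω, ‖v x z‖ ≤ M * W x z

theorem WeightedHolFamily.exists_fixedPoint [CompleteSpace E] (hΩ : IsOpen Ω)
    (hW : ContinuousOn (fun q : ℝ × ℂ => W q.1 q.2) (univ ×ˢ Ω))
    {A : (ℝ → ℂ → E) → ℝ → ℂ → E}
    (hA : ∀ v, WeightedHolFamily Ω W v → WeightedHolFamily Ω W (A v))
    (hcontr : ∀ u v M, WeightedHolFamily Ω W u → WeightedHolFamily Ω W v →
      (∀ x, ∀ z ∈ Ω, ‖u x z - v x z‖ ≤ M * W x z) →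
        ∀ x, ∀ z ∈ Ω, ‖A u x z - A v x z‖ ≤ M / 2 * W x z) :
    ∃ w, WeightedHolFamily Ω W w ∧ ∀ x, ∀ z ∈ Ω, A w x z = w x z := by
  let v (n : ℕ) : ℝ → ℂ → E := A^[n] 0
  have hvs (n : ℕ) : v (n + 1) = A (v n) := Function.iterate_succ_apply' A n 0
  have hv (n : ℕ) : WeightedHolFamily Ω W (v n) := by
    induction n with
    | zero => exact ⟨.of_continuous continuous_const, 0, by simp [v]⟩
    | succ n ih => exact hvs n ▸ hA _ ih
  obtain ⟨M, hM⟩ := (hv 1).2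
  have hstep (n : ℕ) : ∀ x, ∀ z ∈ Ω, ‖v (n + 1) x z - v n x z‖ ≤ M / 2 ^ n * W x z := by
    induction n with
    | zero => simpa [v] using hM
    | succ n ih =>
      have hcontr' := hcontr _ _ _ (hv _) (hv _) ih
      rwa [← hvs, ← hvs, div_div, ← pow_succ] at hcontr'
  obtain ⟨w, hw, hdist⟩ := HolFamily.exists_limit_of_geometric hΩ hW (fun n => (hv n).1) hstep
  have hwW : WeightedHolFamily Ω W w :=
    ⟨hw, 2 * M, fun x z hz => by simpa [v] using hdist 0 x z hz⟩
  refine ⟨w, hwW, fun x z hz => ?_⟩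
  have hpow : Tendsto (fun n : ℕ => ((2 : ℝ) ^ n)⁻¹) atTop (𝓝 0) :=
    (tendsto_pow_atTop_atTop_of_one_lt one_lt_two).inv_tendsto_atTop
  have hlim : Tendsto (fun n => v n x z) atTop (𝓝 (w x z)) :=
    tendsto_iff_norm_sub_tendsto_zero.2 (squeeze_zero (fun _ => norm_nonneg _)
      (fun n => hdist n x z hz) (by simpa using hpow.const_mul (2 * M * W x z)))
  have hlimA : Tendsto (fun n => v (n + 1) x z) atTop (𝓝 (A w x z)) := by
    refine tendsto_iff_norm_sub_tendsto_zero.2 (squeeze_zero (fun _ => norm_nonneg _) (fun n => ?_)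
      (by simpa using hpow.const_mul (M * W x z)))
    rw [hvs]
    exact (hcontr _ _ (2 * M * (2 ^ n)⁻¹) (hv n) hwW
      (fun x z hz => (hdist n x z hz).trans_eq (by ring)) x z hz).trans_eq (by ring)
  exact tendsto_nhds_unique hlimA ((tendsto_add_atTop_iff_nat 1).2 hlim)

end FixedPoint

section JostResolvent

/-- The point `z` together with a square root `r` of `z² + 2` such that, of the four exponents
`0, 2iz, iz - r, iz + r` of the free equation, the first three can be integrated from `+∞` and the
last one from a finite point when the forcing is `O(e^{-γ x})`. -/
structure SpectralPoint (γ η : ℝ) (z r : ℂ) : Prop where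
  pos : 0 < γ
  gap_pos : 0 < η
  re_two_mul_le : (2 * Complex.I * z).re ≤ γ / 2
  sq_root : r ^ 2 = z ^ 2 + 2
  re_sub_le : (Complex.I * z - r).re ≤ γ / 2
  le_re_add : γ + η ≤ (Complex.I * z + r).re
  one_add_norm_le : 1 + ‖z‖ ≤ 2 * ‖r‖

/-- The solution `u` of `u'' = -2iz u' + (0, (2z² + 2) u₂) + f` obtained by integrating the
exponent `iz + r` from `x₀` and the other ones from `+∞`. -/
def jostResolvent (x₀ : ℝ) (z r : ℂ) (f : ℝ → ℂ × ℂ) (x : ℝ) : ℂ × ℂ :=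
  (expPrimitiveTop 0 (expPrimitiveTop (2 * Complex.I * z) fun y => (f y).1) x,
    (2 * r)⁻¹ * (expPrimitiveTop (Complex.I * z - r) (fun y => (f y).2) x -
      expPrimitive x₀ (Complex.I * z + r) (fun y => (f y).2) x))

/-- The derivative of `jostResolvent`. -/
def jostResolventDeriv (x₀ : ℝ) (z r : ℂ) (f : ℝ → ℂ × ℂ) (x : ℝ) : ℂ × ℂ :=
  (expPrimitiveTop (2 * Complex.I * z) (fun y => (f y).1) x,
    (2 * r)⁻¹ * ((Complex.I * z + r) * expPrimitive x₀ (Complex.I * z + r) (fun y => (f y).2) x -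
      (Complex.I * z - r) * expPrimitiveTop (Complex.I * z - r) (fun y => (f y).2) x))

/-- The constant in the forward estimates for `jostResolvent`. -/
def jostConst (γ η : ℝ) : ℝ := 2 / γ ^ 2 + 2 / γ + 1 / η

variable {γ η x₀ x C D : ℝ} {z r : ℂ} {f g : ℝ → ℂ × ℂ}

namespace SpectralPoint

theorem root_ne_zero (hz : SpectralPoint γ η z r) : r ≠ 0 := by
  rintro rfl
  have := hz.one_add_norm_le
  simp only [norm_zero, mul_zero] at this
  linarith [norm_nonneg z]

theorem half_lt (hz : SpectralPoint γ η z r) : γ / 2 < γ := half_lt_self hz.pos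

theorem jostConst_nonneg (hz : SpectralPoint γ η z r) : 0 ≤ jostConst γ η := by
  have := hz.pos
  have := hz.gap_pos
  unfold jostConst
  positivity

theorem norm_root_pos (hz : SpectralPoint γ η z r) : 0 < ‖r‖ := by
  linarith [hz.one_add_norm_le, norm_nonneg z]

theorem norm_fst_resolvent_le (hz : SpectralPoint γ η z r) (hf : Continuous f)
    (hfb : ∀ y, x₀ ≤ y → ‖f y‖ ≤ D * rexp (-γ * y)) (hx : x₀ ≤ x) :
    (1 + ‖z‖) * ‖(jostResolvent x₀ z r f x).1‖ ≤ (2 / γ ^ 2 + 2 / γ) * (D * rexp (-γ * x)) := by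
  have hγ := hz.pos
  have hf₁ : Continuous fun y => (f y).1 := hf.fst
  have hf₁b (y : ℝ) (hy : x₀ ≤ y) : ‖(f y).1‖ ≤ D * rexp (-γ * y) :=
    (norm_fst_le _).trans (hfb y hy)
  set p := expPrimitiveTop (2 * Complex.I * z) fun y => (f y).1
  have hpb (y : ℝ) (hy : x₀ ≤ y) : ‖p y‖ ≤ D / (γ - γ / 2) * rexp (-γ * y) :=
    norm_expPrimitiveTop_le hz.half_lt hz.re_two_mul_le hf₁b hy
  have hqb : ‖expPrimitiveTop 0 p x‖ ≤ D / (γ - γ / 2) / (γ - 0) * rexp (-γ * x) :=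
    norm_expPrimitiveTop_le hγ le_rfl hpb hx
  have htail : ‖expPrimitiveTop 0 (fun y => (f y).1) x‖ ≤ D / (γ - 0) * rexp (-γ * x) :=
    norm_expPrimitiveTop_le hγ le_rfl hf₁b hx
  have hzq : 2 * (‖z‖ * ‖expPrimitiveTop 0 p x‖) ≤
      D / (γ - 0) * rexp (-γ * x) + D / (γ - γ / 2) * rexp (-γ * x) := by
    have hid := smul_expPrimitiveTop_zero_expPrimitiveTop hγ hz.half_lt hz.re_two_mul_le hf₁ hf₁b
      (x := x)
    calc 2 * (‖z‖ * ‖expPrimitiveTop 0 p x‖) = ‖(2 * Complex.I * z) • expPrimitiveTop 0 p x‖ := by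
          simp [mul_assoc]
      _ ≤ ‖expPrimitiveTop 0 (fun y => (f y).1) x‖ + ‖p x‖ := by
          rw [hid]; exact norm_sub_le _ _
      _ ≤ _ := add_le_add htail (hpb x hx)
  have hD : 0 ≤ D * rexp (-γ * x) / γ := by
    have := (norm_nonneg _).trans (hfb x hx)
    positivity
  calc (1 + ‖z‖) * ‖expPrimitiveTop 0 p x‖
      ≤ D / (γ - γ / 2) / (γ - 0) * rexp (-γ * x) +
        (D / (γ - 0) * rexp (-γ * x) + D / (γ - γ / 2) * rexp (-γ * x)) / 2 := by linarith
    _ = (2 / γ ^ 2 + 2 / γ) * (D * rexp (-γ * x)) - D * rexp (-γ * x) / γ / 2 := by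
        rw [sub_half, sub_zero]; field_simp; ring
    _ ≤ _ := by linarith

theorem norm_expPrimitive_le (hz : SpectralPoint γ η z r) {g : ℝ → ℂ} (hg : Continuous g)
    (hgb : ∀ y, x₀ ≤ y → ‖g y‖ ≤ D * rexp (-γ * y)) (hx : x₀ ≤ x) :
    ‖expPrimitive x₀ (Complex.I * z + r) g x‖ ≤ 1 / η * (D * rexp (-γ * x)) := by
  have hη := hz.gap_pos
  have h := norm_le_of_hasDerivAt_neg_smul_add (C := D * rexp (-γ * x₀)) (ρ := -γ - η) (κ := -γ) hx
    (by linarith [hz.le_re_add]) (by linarith) (fun _ => hasDerivAt_expPrimitive (a := x₀) hg)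
    (fun t ht => (hgb t ht.1).trans_eq (by rw [mul_assoc, ← Real.exp_add]; ring_nf))
  refine h.trans_eq ?_
  rw [expPrimitive_self, norm_zero, show -γ * x = -γ * x₀ + -γ * (x - x₀) by ring, Real.exp_add]
  ring

theorem norm_snd_combination_le (hz : SpectralPoint γ η z r) (hf : Continuous f)
    (hfb : ∀ y, x₀ ≤ y → ‖f y‖ ≤ D * rexp (-γ * y)) (hx : x₀ ≤ x) :
    ‖expPrimitiveTop (Complex.I * z - r) (fun y => (f y).2) x‖ +
      ‖expPrimitive x₀ (Complex.I * z + r) (fun y => (f y).2) x‖ ≤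
        (2 / γ + 1 / η) * (D * rexp (-γ * x)) := by
  have hγ := hz.pos
  have hf₂b (y : ℝ) (hy : x₀ ≤ y) : ‖(f y).2‖ ≤ D * rexp (-γ * y) :=
    (norm_snd_le _).trans (hfb y hy)
  have htop := norm_expPrimitiveTop_le hz.half_lt hz.re_sub_le hf₂b hx
  have hbot := hz.norm_expPrimitive_le hf.snd hf₂b hx
  calc _ ≤ D / (γ - γ / 2) * rexp (-γ * x) + 1 / η * (D * rexp (-γ * x)) := add_le_add htop hbot
    _ = _ := by rw [sub_half]; field_simp

theorem norm_jostResolvent_le (hz : SpectralPoint γ η z r) (hf : Continuous f)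
    (hfb : ∀ y, x₀ ≤ y → ‖f y‖ ≤ D * rexp (-γ * y)) (hx : x₀ ≤ x) :
    (1 + ‖z‖) * ‖jostResolvent x₀ z r f x‖ ≤ jostConst γ η * (D * rexp (-γ * x)) := by
  have hγ := hz.pos
  have hη := hz.gap_pos
  have hr := hz.norm_root_pos
  have hD := (norm_nonneg _).trans (hfb x hx)
  have hsnd := hz.norm_snd_combination_le hf hfb hx
  rw [Prod.norm_def, mul_max_of_nonneg _ _ (by positivity)]
  refine max_le ((hz.norm_fst_resolvent_le hf hfb hx).trans ?_) ?_
  · gcongr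
    simp only [jostConst, le_add_iff_nonneg_right]
    positivity
  calc (1 + ‖z‖) * ‖(jostResolvent x₀ z r f x).2‖
      ≤ (2 * ‖r‖) * ((2 * ‖r‖)⁻¹ * ((2 / γ + 1 / η) * (D * rexp (-γ * x)))) := by
        rw [jostResolvent, norm_mul, norm_inv, norm_mul, Complex.norm_ofNat]
        gcongr
        · exact hz.one_add_norm_le
        · exact (norm_sub_le _ _).trans hsnd
    _ = (2 / γ + 1 / η) * (D * rexp (-γ * x)) := mul_inv_cancel_left₀ (by positivity) _
    _ ≤ jostConst γ η * (D * rexp (-γ * x)) := by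
        gcongr
        simp only [jostConst, add_assoc, le_add_iff_nonneg_left]
        positivity

theorem norm_jostResolventDeriv_le (hz : SpectralPoint γ η z r) (hf : Continuous f)
    (hfb : ∀ y, x₀ ≤ y → ‖f y‖ ≤ D * rexp (-γ * y)) (hx : x₀ ≤ x) :
    ‖jostResolventDeriv x₀ z r f x‖ ≤ 2 * jostConst γ η * (D * rexp (-γ * x)) := by
  have hγ := hz.pos
  have hη := hz.gap_pos
  have hr := hz.norm_root_pos
  have hD := (norm_nonneg _).trans (hfb x hx)
  have hzr : ‖z‖ + ‖r‖ ≤ 4 * ‖r‖ := by linarith [hz.one_add_norm_le]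
  have hsnd := hz.norm_snd_combination_le hf hfb hx
  set b := expPrimitiveTop (Complex.I * z - r) (fun y => (f y).2) x
  set a := expPrimitive x₀ (Complex.I * z + r) (fun y => (f y).2) x
  have hcomb : ‖(Complex.I * z + r) * a - (Complex.I * z - r) * b‖ ≤
      (4 * ‖r‖) * ((2 / γ + 1 / η) * (D * rexp (-γ * x))) := by
    calc _ ≤ ‖Complex.I * z + r‖ * ‖a‖ + ‖Complex.I * z - r‖ * ‖b‖ := by
          simpa only [norm_mul] using
            norm_sub_le ((Complex.I * z + r) * a) ((Complex.I * z - r) * b)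
      _ ≤ (‖z‖ + ‖r‖) * ‖a‖ + (‖z‖ + ‖r‖) * ‖b‖ := by
          gcongr
          · simpa using norm_add_le (Complex.I * z) r
          · simpa using norm_sub_le (Complex.I * z) r
      _ = (‖z‖ + ‖r‖) * (‖b‖ + ‖a‖) := by ring
      _ ≤ _ := by gcongr
  refine max_le ?_ ?_
  · refine (norm_expPrimitiveTop_le hz.half_lt hz.re_two_mul_le
      (fun y hy => (norm_fst_le _).trans (hfb y hy)) hx).trans ?_
    rw [sub_half, show D / (γ / 2) * rexp (-γ * x) = 2 / γ * (D * rexp (-γ * x)) by field_simp]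
    gcongr
    have : 0 ≤ 2 / γ ^ 2 + 1 / η + (2 / γ ^ 2 + 2 / γ + 1 / η) := by positivity
    rw [jostConst]
    linarith
  calc ‖(jostResolventDeriv x₀ z r f x).2‖
      ≤ (2 * ‖r‖)⁻¹ * ((4 * ‖r‖) * ((2 / γ + 1 / η) * (D * rexp (-γ * x)))) := by
        rw [jostResolventDeriv, norm_mul, norm_inv, norm_mul, Complex.norm_ofNat]
        gcongr
    _ = 2 * (2 / γ + 1 / η) * (D * rexp (-γ * x)) := by field_simp; ring
    _ ≤ _ := by
        gcongr
        simp only [jostConst, add_assoc, le_add_iff_nonneg_left]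
        positivity

theorem hasDerivAt_jostResolvent (hz : SpectralPoint γ η z r) (hf : Continuous f)
    (hfb : ∀ y, x₀ ≤ y → ‖f y‖ ≤ D * rexp (-γ * y)) (x : ℝ) :
    HasDerivAt (jostResolvent x₀ z r f) (jostResolventDeriv x₀ z r f x) x := by
  have hγ := hz.pos
  have hf₁b (y : ℝ) (hy : x₀ ≤ y) : ‖(f y).1‖ ≤ D * rexp (-γ * y) :=
    (norm_fst_le _).trans (hfb y hy)
  have hf₂b (y : ℝ) (hy : x₀ ≤ y) : ‖(f y).2‖ ≤ D * rexp (-γ * y) :=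
    (norm_snd_le _).trans (hfb y hy)
  have hp (y : ℝ) := hasDerivAt_expPrimitiveTop hz.half_lt hz.re_two_mul_le hf.fst hf₁b (x := y)
  have hq := hasDerivAt_expPrimitiveTop (c := 0) hγ le_rfl
    (continuous_iff_continuousAt.2 fun y => (hp y).continuousAt)
    (fun y hy => norm_expPrimitiveTop_le hz.half_lt hz.re_two_mul_le hf₁b hy) (x := x)
  have hb := hasDerivAt_expPrimitiveTop hz.half_lt hz.re_sub_le hf.snd hf₂b (x := x)
  have ha := hasDerivAt_expPrimitive (a := x₀) (c := Complex.I * z + r) hf.snd (x := x)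
  refine (hq.prodMk ((hb.sub ha).const_mul (2 * r)⁻¹)).congr_deriv (Prod.ext ?_ ?_)
  · simp [jostResolventDeriv]
  · simp only [jostResolventDeriv, smul_eq_mul]
    ring

theorem hasDerivAt_jostResolventDeriv (hz : SpectralPoint γ η z r) (hf : Continuous f)
    (hfb : ∀ y, x₀ ≤ y → ‖f y‖ ≤ D * rexp (-γ * y)) (x : ℝ) :
    HasDerivAt (jostResolventDeriv x₀ z r f)
      (-((2 * Complex.I * z) • jostResolventDeriv x₀ z r f x) +
        (0, (2 * z ^ 2 + 2) * (jostResolvent x₀ z r f x).2) + f x) x := by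
  have hr := hz.root_ne_zero
  have hp := hasDerivAt_expPrimitiveTop hz.half_lt hz.re_two_mul_le hf.fst
    (fun y hy => (norm_fst_le _).trans (hfb y hy)) (x := x)
  have hb := hasDerivAt_expPrimitiveTop hz.half_lt hz.re_sub_le hf.snd
    (fun y hy => (norm_snd_le _).trans (hfb y hy)) (x := x)
  have ha := hasDerivAt_expPrimitive (a := x₀) (c := Complex.I * z + r) hf.snd (x := x)
  refine (hp.prodMk (((ha.const_mul (Complex.I * z + r)).sub
    (hb.const_mul (Complex.I * z - r))).const_mul (2 * r)⁻¹)).congr_deriv (Prod.ext ?_ ?_)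
  · simp [jostResolventDeriv]
  · simp only [jostResolventDeriv, jostResolvent, Prod.smul_mk, Prod.neg_mk, Prod.snd_add,
      smul_eq_mul]
    field_simp
    linear_combination (expPrimitiveTop (Complex.I * z - r) (fun y => (f y).2) x -
      expPrimitive x₀ (Complex.I * z + r) (fun y => (f y).2) x) *
        (hz.sq_root - z ^ 2 * Complex.I_sq)

theorem jostResolvent_sub (hz : SpectralPoint γ η z r) (hf : Continuous f)
    (hfb : ∀ y, x₀ ≤ y → ‖f y‖ ≤ C * rexp (-γ * y)) (hg : Continuous g)
    (hgb : ∀ y, x₀ ≤ y → ‖g y‖ ≤ D * rexp (-γ * y)) (x : ℝ) :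
    jostResolvent x₀ z r (fun y => f y - g y) x =
      jostResolvent x₀ z r f x - jostResolvent x₀ z r g x := by
  have hγ := hz.pos
  have hf₁b (y : ℝ) (hy : x₀ ≤ y) := (norm_fst_le _).trans (hfb y hy)
  have hg₁b (y : ℝ) (hy : x₀ ≤ y) := (norm_fst_le _).trans (hgb y hy)
  have hp : (expPrimitiveTop (2 * Complex.I * z) fun y => (f y).1 - (g y).1) = fun y =>
      expPrimitiveTop (2 * Complex.I * z) (fun y => (f y).1) y -
        expPrimitiveTop (2 * Complex.I * z) (fun y => (g y).1) y := by
    funext y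
    exact expPrimitiveTop_sub hz.half_lt hz.re_two_mul_le hf.fst hf₁b hg.fst hg₁b
  have hcont {h : ℝ → ℂ × ℂ} {B : ℝ} (hh : Continuous h)
      (hhb : ∀ y, x₀ ≤ y → ‖(h y).1‖ ≤ B * rexp (-γ * y)) :
      Continuous (expPrimitiveTop (2 * Complex.I * z) fun y => (h y).1) :=
    continuous_iff_continuousAt.2 fun y =>
      (hasDerivAt_expPrimitiveTop hz.half_lt hz.re_two_mul_le hh.fst hhb).continuousAt
  refine Prod.ext ?_ ?_
  · simp only [jostResolvent, Prod.fst_sub, hp]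
    exact expPrimitiveTop_sub hγ le_rfl (hcont hf hf₁b)
      (fun y hy => norm_expPrimitiveTop_le hz.half_lt hz.re_two_mul_le hf₁b hy) (hcont hg hg₁b)
      (fun y hy => norm_expPrimitiveTop_le hz.half_lt hz.re_two_mul_le hg₁b hy)
  · simp only [jostResolvent, Prod.snd_sub]
    rw [expPrimitiveTop_sub hz.half_lt hz.re_sub_le hf.snd
      (fun y hy => (norm_snd_le _).trans (hfb y hy)) hg.snd
      (fun y hy => (norm_snd_le _).trans (hgb y hy)), expPrimitive_sub hf.snd hg.snd]
    ring

theorem norm_fst_resolvent_le_of_le (hz : SpectralPoint γ η z r) (hx₀ : 0 ≤ x₀) {K κ : ℝ}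
    (hK : 1 ≤ K) (hκ : 2 * ‖z‖ + K ≤ κ) (hf : Continuous f)
    (hfb : ∀ y, x₀ ≤ y → ‖f y‖ ≤ D * rexp (-γ * y))
    (hfb' : ∀ y, y ≤ x₀ → ‖f y‖ ≤ D * rexp (κ * (x₀ - y))) (hx : x ≤ x₀) :
    ‖(jostResolvent x₀ z r f x).1‖ ≤
      (‖(jostResolvent x₀ z r f x₀).1‖ + (2 / γ + 1) * D / K) * rexp (κ * (x₀ - x)) := by
  have hγ := hz.pos
  have hD : 0 ≤ D := by simpa using (norm_nonneg _).trans (hfb' x₀ le_rfl)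
  have hf₁b (y : ℝ) (hy : x₀ ≤ y) := (norm_fst_le _).trans (hfb y hy)
  have hpd (y : ℝ) := hasDerivAt_expPrimitiveTop hz.half_lt hz.re_two_mul_le hf.fst hf₁b (x := y)
  have hqd (y : ℝ) := hasDerivAt_expPrimitiveTop (c := 0) hγ le_rfl
    (continuous_iff_continuousAt.2 fun y => (hpd y).continuousAt)
    (fun y hy => norm_expPrimitiveTop_le hz.half_lt hz.re_two_mul_le hf₁b hy) (x := y)
  have hp₀ : ‖expPrimitiveTop (2 * Complex.I * z) (fun y => (f y).1) x₀‖ ≤ 2 / γ * D := by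
    refine (norm_expPrimitiveTop_le hz.half_lt hz.re_two_mul_le hf₁b le_rfl).trans ?_
    have hexp : rexp (-γ * x₀) ≤ 1 := Real.exp_le_one_iff.2 (by nlinarith)
    calc D / (γ - γ / 2) * rexp (-γ * x₀) ≤ D / (γ - γ / 2) * 1 := by
          rw [sub_half]; gcongr
      _ = 2 / γ * D := by rw [sub_half]; field_simp
  have hre : (2 * Complex.I * z).re ≤ κ - K :=
    (Complex.re_le_norm _).trans (by simpa using (by linarith : 2 * ‖z‖ ≤ κ - K))
  have hpb (y : ℝ) (hy : y ∈ Icc x x₀) :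
      ‖expPrimitiveTop (2 * Complex.I * z) (fun y => (f y).1) y‖ ≤
        (2 / γ + 1) * D * rexp (κ * (x₀ - y)) := by
    refine (norm_le_of_hasDerivAt_neg_smul_add_of_le hy.2 hre (by linarith) hpd
      (fun t ht => (norm_fst_le _).trans (hfb' t ht.2))).trans ?_
    gcongr
    rw [sub_sub_cancel, add_mul, one_mul]
    exact add_le_add hp₀ (div_le_self hD hK)
  have hq := norm_le_of_hasDerivAt_neg_smul_add_of_le hx (c := 0) (ρ := κ - K)
    (by rw [Complex.zero_re]; linarith [norm_nonneg z]) (by linarith) hqd hpb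
  rwa [sub_sub_cancel] at hq

theorem norm_snd_resolvent_le_of_le (hz : SpectralPoint γ η z r) {K κ : ℝ} (hK : 0 < K)
    (hκ : ‖r‖ + ‖z‖ + K ≤ κ) (hf : Continuous f)
    (hfb : ∀ y, x₀ ≤ y → ‖f y‖ ≤ D * rexp (-γ * y))
    (hfb' : ∀ y, y ≤ x₀ → ‖f y‖ ≤ D * rexp (κ * (x₀ - y))) (hx : x ≤ x₀) :
    ‖(jostResolvent x₀ z r f x).2‖ ≤
      (‖(jostResolvent x₀ z r f x₀).2‖ + 2 * D / K) * rexp (κ * (x₀ - x)) := by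
  have hD : 0 ≤ D := by simpa using (norm_nonneg _).trans (hfb' x₀ le_rfl)
  have hr : 1 ≤ 2 * ‖r‖ := by linarith [hz.one_add_norm_le, norm_nonneg z]
  have hre₁ : (Complex.I * z - r).re ≤ κ - K := (Complex.re_le_norm _).trans
    ((norm_sub_le _ _).trans (by rw [norm_mul, Complex.norm_I]; linarith))
  have hre₂ : (Complex.I * z + r).re ≤ κ - K := (Complex.re_le_norm _).trans
    ((norm_add_le _ _).trans (by rw [norm_mul, Complex.norm_I]; linarith))
  have hf₂b (t : ℝ) (ht : t ∈ Icc x x₀) := (norm_snd_le _).trans (hfb' t ht.2)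
  have hb := norm_le_of_hasDerivAt_neg_smul_add_of_le hx hre₁ (by linarith)
    (fun _ => hasDerivAt_expPrimitiveTop hz.half_lt hz.re_sub_le hf.snd
      (fun y hy => (norm_snd_le _).trans (hfb y hy))) hf₂b
  have ha := norm_le_of_hasDerivAt_neg_smul_add_of_le hx hre₂ (by linarith)
    (fun _ => hasDerivAt_expPrimitive (a := x₀) hf.snd) hf₂b
  rw [expPrimitive_self, norm_zero, zero_add, sub_sub_cancel] at ha
  rw [sub_sub_cancel] at hb
  simp only [jostResolvent, norm_mul, expPrimitive_self, sub_zero, norm_inv, Complex.norm_ofNat]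
  calc _ ≤ (2 * ‖r‖)⁻¹ * ((‖expPrimitiveTop (Complex.I * z - r) (fun y => (f y).2) x₀‖ +
          2 * D / K) * rexp (κ * (x₀ - x))) := by
        gcongr
        exact (norm_sub_le _ _).trans ((add_le_add hb ha).trans_eq (by ring))
    _ = ((2 * ‖r‖)⁻¹ * ‖expPrimitiveTop (Complex.I * z - r) (fun y => (f y).2) x₀‖ +
          (2 * ‖r‖)⁻¹ * (2 * D / K)) * rexp (κ * (x₀ - x)) := by ring
    _ ≤ _ := by
        gcongr
        exact mul_le_of_le_one_left (by positivity) (inv_le_one_of_one_le₀ hr)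

theorem norm_jostResolvent_le_of_le (hz : SpectralPoint γ η z r) (hx₀ : 0 ≤ x₀) {K κ : ℝ}
    (hK : 1 ≤ K) (hκ : ‖r‖ + 2 * ‖z‖ + K ≤ κ) (hf : Continuous f)
    (hfb : ∀ y, x₀ ≤ y → ‖f y‖ ≤ D * rexp (-γ * y))
    (hfb' : ∀ y, y ≤ x₀ → ‖f y‖ ≤ D * rexp (κ * (x₀ - y))) (hx : x ≤ x₀) :
    ‖jostResolvent x₀ z r f x‖ ≤
      (‖jostResolvent x₀ z r f x₀‖ + (2 / γ + 2) * D / K) * rexp (κ * (x₀ - x)) := by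
  have hγ := hz.pos
  have hD : 0 ≤ D := by simpa using (norm_nonneg _).trans (hfb' x₀ le_rfl)
  refine max_le
    ((hz.norm_fst_resolvent_le_of_le (K := K) hx₀ hK (by linarith [norm_nonneg r]) hf hfb hfb'
      hx).trans ?_)
    ((hz.norm_snd_resolvent_le_of_le (K := K) (by linarith) (by linarith [norm_nonneg z]) hf hfb
      hfb' hx).trans ?_)
  · gcongr
    · exact norm_fst_le _
    · norm_num
  · gcongr
    · exact norm_snd_le _
    · simp only [le_add_iff_nonneg_left]
      positivity

end SpectralPoint

/-- An open set of spectral parameters on which `root` is a holomorphic branch of `√(z² + 2)`. -/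
structure SpectralDomain (γ η : ℝ) (Ω : Set ℂ) (root : ℂ → ℂ) : Prop where
  pos : 0 < γ
  isOpen : IsOpen Ω
  differentiableOn : DifferentiableOn ℂ root Ω
  spectralPoint : ∀ z ∈ Ω, SpectralPoint γ η z (root z)

namespace SpectralDomain

variable {Ω : Set ℂ} {root : ℂ → ℂ} {F : ℝ → ℂ → ℂ × ℂ}

theorem holFamily_expPrimitiveTop_fst (hd : SpectralDomain γ η Ω root) (hF : HolFamily Ω F)
    (hFb : ∀ y, x₀ ≤ y → ∀ z ∈ Ω, ‖F y z‖ ≤ D * rexp (-γ * y)) :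
    HolFamily Ω fun x z => expPrimitiveTop (2 * Complex.I * z) (fun y => (F y z).1) x :=
  (hF.clm_comp (ContinuousLinearMap.fst ℂ ℂ ℂ)).expPrimitiveTop hd.isOpen (by fun_prop)
    (half_lt_self hd.pos) (fun z hz => (hd.spectralPoint z hz).re_two_mul_le)
    fun y hy z hz => (norm_fst_le _).trans (hFb y hy z hz)

theorem holFamily_expPrimitiveTop_snd (hd : SpectralDomain γ η Ω root) (hF : HolFamily Ω F)
    (hFb : ∀ y, x₀ ≤ y → ∀ z ∈ Ω, ‖F y z‖ ≤ D * rexp (-γ * y)) :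
    HolFamily Ω fun x z => expPrimitiveTop (Complex.I * z - root z) (fun y => (F y z).2) x := by
  have := hd.differentiableOn
  exact (hF.clm_comp (ContinuousLinearMap.snd ℂ ℂ ℂ)).expPrimitiveTop hd.isOpen (by fun_prop)
    (half_lt_self hd.pos) (fun z hz => (hd.spectralPoint z hz).re_sub_le)
    fun y hy z hz => (norm_snd_le _).trans (hFb y hy z hz)

theorem holFamily_expPrimitive_snd (hd : SpectralDomain γ η Ω root) (hF : HolFamily Ω F) :
    HolFamily Ω fun x z => expPrimitive x₀ (Complex.I * z + root z) (fun y => (F y z).2) x := by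
  have := hd.differentiableOn
  exact (hF.clm_comp (ContinuousLinearMap.snd ℂ ℂ ℂ)).expPrimitive hd.isOpen (by fun_prop) x₀

theorem holFamily_two_mul_root_inv (hd : SpectralDomain γ η Ω root) :
    HolFamily Ω fun _ z => (2 * root z)⁻¹ :=
  .of_differentiableOn ((hd.differentiableOn.const_mul 2).inv fun z hz =>
    mul_ne_zero two_ne_zero (hd.spectralPoint z hz).root_ne_zero)

theorem holFamily_jostResolvent (hd : SpectralDomain γ η Ω root) (hF : HolFamily Ω F)
    (hFb : ∀ y, x₀ ≤ y → ∀ z ∈ Ω, ‖F y z‖ ≤ D * rexp (-γ * y)) :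
    HolFamily Ω fun x z => jostResolvent x₀ z (root z) (fun y => F y z) x :=
  ((hd.holFamily_expPrimitiveTop_fst hF hFb).expPrimitiveTop hd.isOpen (differentiableOn_const 0)
    hd.pos (fun _ _ => le_rfl) fun _ hy z hz =>
      norm_expPrimitiveTop_le (half_lt_self hd.pos) (hd.spectralPoint z hz).re_two_mul_le
        (fun t ht => (norm_fst_le _).trans (hFb t ht z hz)) hy).prodMk
  (hd.holFamily_two_mul_root_inv.smul ((hd.holFamily_expPrimitiveTop_snd hF hFb).sub
    (hd.holFamily_expPrimitive_snd hF)))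

theorem holFamily_jostResolventDeriv (hd : SpectralDomain γ η Ω root) (hF : HolFamily Ω F)
    (hFb : ∀ y, x₀ ≤ y → ∀ z ∈ Ω, ‖F y z‖ ≤ D * rexp (-γ * y)) :
    HolFamily Ω fun x z => jostResolventDeriv x₀ z (root z) (fun y => F y z) x := by
  have hroot := hd.differentiableOn
  have hsum : HolFamily Ω fun _ z => Complex.I * z + root z := .of_differentiableOn (by fun_prop)
  have hdiff : HolFamily Ω fun _ z => Complex.I * z - root z := .of_differentiableOn (by fun_prop)
  exact (hd.holFamily_expPrimitiveTop_fst hF hFb).prodMk (hd.holFamily_two_mul_root_inv.smul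
    ((hsum.smul (hd.holFamily_expPrimitive_snd hF)).sub
      (hdiff.smul (hd.holFamily_expPrimitiveTop_snd hF hFb))))

end SpectralDomain

end JostResolvent

section Amplitude

/-- The contribution `V₁ u + V₂ (u₂, u₁)` of the potentials to the equation of an amplitude. -/
def potentialAction (V₁ V₂ : ℝ → ℝ) (y : ℝ) (u : ℂ × ℂ) : ℂ × ℂ :=
  (V₁ y : ℂ) • u + (V₂ y : ℂ) • u.swap

/-- Continuous potentials with `|V₁ y| + |V₂ y| ≤ C₀ e^{-γ |y|}`. -/
structure DecayingPotential (γ C₀ : ℝ) (V₁ V₂ : ℝ → ℝ) : Prop where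
  continuous_fst : Continuous V₁
  continuous_snd : Continuous V₂
  bound : ∀ y, |V₁ y| + |V₂ y| ≤ C₀ * rexp (-γ * |y|)

/-- `e^{izx} u(x)` solves `ℋf = (1 + z²) f`, written as a first order system for `u` and
`u' = ∂ₓu`. -/
structure IsAmplitude (V₁ V₂ : ℝ → ℝ) (z : ℂ) (u u' : ℝ → ℂ × ℂ) : Prop where
  hasDerivAt : ∀ x, HasDerivAt u (u' x) x
  hasDerivAt_deriv : ∀ x, HasDerivAt u' (-((2 * Complex.I * z) • u' x) +
    (0, (2 * z ^ 2 + 2) * (u x).2) + potentialAction V₁ V₂ x (u x)) x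

/-- Holomorphic families of amplitudes, with parameter `z ∈ Ω`. -/
structure AmplitudeFamily (V₁ V₂ : ℝ → ℝ) (Ω : Set ℂ) (w w' : ℝ → ℂ → ℂ × ℂ) : Prop where
  holFamily : HolFamily Ω w
  holFamily_deriv : HolFamily Ω w'
  isAmplitude : ∀ z ∈ Ω, IsAmplitude V₁ V₂ z (fun x => w x z) (fun x => w' x z)

variable {γ η C₀ x₀ M : ℝ} {z r : ℂ} {V₁ V₂ : ℝ → ℝ} {u : ℝ → ℂ × ℂ}

theorem potentialAction_sub (y : ℝ) (u v : ℂ × ℂ) : potentialAction V₁ V₂ y (u - v) =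
    potentialAction V₁ V₂ y u - potentialAction V₁ V₂ y v := by
  simp only [potentialAction, Prod.swap_sub, smul_sub]
  abel

theorem norm_potentialAction_le (y : ℝ) (u : ℂ × ℂ) :
    ‖potentialAction V₁ V₂ y u‖ ≤ (|V₁ y| + |V₂ y|) * ‖u‖ := by
  refine (norm_add_le _ _).trans_eq ?_
  rw [norm_smul, norm_smul, Complex.norm_real, Complex.norm_real, Real.norm_eq_abs,
    Real.norm_eq_abs, show ‖u.swap‖ = ‖u‖ from max_comm _ _, add_mul]

theorem HolFamily.potentialAction {Ω : Set ℂ} {v : ℝ → ℂ → ℂ × ℂ} (hv : HolFamily Ω v)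
    (hV₁ : Continuous V₁) (hV₂ : Continuous V₂) :
    HolFamily Ω fun x z => _root_.potentialAction V₁ V₂ x (v x z) :=
  have hswap := hv.clm_comp (ContinuousLinearEquiv.prodComm ℂ ℂ ℂ).toContinuousLinearMap
  ((HolFamily.of_continuous (by fun_prop)).smul hv).add
    ((HolFamily.of_continuous (by fun_prop)).smul hswap)

/-- The weight `1` on `[x₀, ∞)`, growing like `e^{κ (x₀ - x)}` to the left of `x₀` with a rate `κ`
that beats the exponents of the free equation by a multiple of the size `C₀` of the potentials. -/
def jostWeight (γ C₀ x₀ : ℝ) (z r : ℂ) (x : ℝ) : ℝ :=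
  rexp ((‖r‖ + 2 * ‖z‖ + (4 * (2 / γ + 2) * C₀ + 1)) * max (x₀ - x) 0)

theorem jostWeight_of_le {x : ℝ} (hx : x₀ ≤ x) : jostWeight γ C₀ x₀ z r x = 1 := by
  simp [jostWeight, hx]

namespace DecayingPotential

theorem nonneg (hV : DecayingPotential γ C₀ V₁ V₂) : 0 ≤ C₀ := by
  simpa using (by positivity : 0 ≤ |V₁ 0| + |V₂ 0|).trans (hV.bound 0)

theorem continuous_potentialAction (hV : DecayingPotential γ C₀ V₁ V₂) (hu : Continuous u) :
    Continuous fun y => potentialAction V₁ V₂ y (u y) := by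
  have := hV.continuous_fst
  have := hV.continuous_snd
  unfold potentialAction
  fun_prop

theorem norm_potentialAction_le_of_le (hV : DecayingPotential γ C₀ V₁ V₂) (hx₀ : 0 ≤ x₀)
    (hu : ∀ x, ‖u x‖ ≤ M * jostWeight γ C₀ x₀ z r x) (y : ℝ) (hy : x₀ ≤ y) :
    ‖potentialAction V₁ V₂ y (u y)‖ ≤ C₀ * M * rexp (-γ * y) := by
  have huy : ‖u y‖ ≤ M := by simpa [jostWeight_of_le hy] using hu y
  calc _ ≤ (|V₁ y| + |V₂ y|) * ‖u y‖ := norm_potentialAction_le _ _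
    _ ≤ C₀ * rexp (-γ * |y|) * M := by
        gcongr
        · exact (by positivity : 0 ≤ |V₁ y| + |V₂ y|).trans (hV.bound y)
        · exact hV.bound y
    _ = C₀ * M * rexp (-γ * y) := by rw [abs_of_nonneg (hx₀.trans hy)]; ring

theorem norm_jostResolvent_potentialAction_le_of_le (hV : DecayingPotential γ C₀ V₁ V₂)
    (hz : SpectralPoint γ η z r) (hx₀ : 0 ≤ x₀)
    (hsmall : jostConst γ η * (C₀ * rexp (-γ * x₀)) ≤ (1 + ‖z‖) / 4) (hu : Continuous u)
    (hM : ∀ x, ‖u x‖ ≤ M * jostWeight γ C₀ x₀ z r x) {x : ℝ} (hx : x₀ ≤ x) :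
    ‖jostResolvent x₀ z r (fun y => potentialAction V₁ V₂ y (u y)) x‖ ≤ M / 4 := by
  have hγ := hz.pos
  have hC₀ := hV.nonneg
  have hMnonneg : 0 ≤ M := by
    simpa [jostWeight_of_le le_rfl] using (norm_nonneg _).trans (hM x₀)
  refine le_of_mul_le_mul_left ?_ (by positivity : 0 < 1 + ‖z‖)
  calc _ ≤ jostConst γ η * (C₀ * M * rexp (-γ * x)) := hz.norm_jostResolvent_le
        (hV.continuous_potentialAction hu) (hV.norm_potentialAction_le_of_le hx₀ hM) hx
    _ ≤ jostConst γ η * (C₀ * M * rexp (-γ * x₀)) := by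
        have := hz.jostConst_nonneg
        gcongr _ * (_ * rexp ?_)
        nlinarith
    _ = jostConst γ η * (C₀ * rexp (-γ * x₀)) * M := by ring
    _ ≤ (1 + ‖z‖) / 4 * M := by gcongr
    _ = (1 + ‖z‖) * (M / 4) := by ring

theorem norm_jostResolvent_potentialAction_le (hV : DecayingPotential γ C₀ V₁ V₂)
    (hz : SpectralPoint γ η z r) (hx₀ : 0 ≤ x₀)
    (hsmall : jostConst γ η * (C₀ * rexp (-γ * x₀)) ≤ (1 + ‖z‖) / 4) (hu : Continuous u)
    (hM : ∀ x, ‖u x‖ ≤ M * jostWeight γ C₀ x₀ z r x) (x : ℝ) :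
    ‖jostResolvent x₀ z r (fun y => potentialAction V₁ V₂ y (u y)) x‖ ≤
      M / 2 * jostWeight γ C₀ x₀ z r x := by
  have hγ := hz.pos
  have hC₀ := hV.nonneg
  have hMnonneg : 0 ≤ M := by
    simpa [jostWeight_of_le le_rfl] using (norm_nonneg _).trans (hM x₀)
  have hforward {x : ℝ} (hx : x₀ ≤ x) :=
    hV.norm_jostResolvent_potentialAction_le_of_le hz hx₀ hsmall hu hM hx
  rcases le_total x₀ x with hx | hx
  · rw [jostWeight_of_le hx]
    linarith [hforward hx]
  set K := 4 * (2 / γ + 2) * C₀ + 1 with hK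
  have hK₁ : 1 ≤ K := by rw [hK]; simp only [le_add_iff_nonneg_left]; positivity
  have hW {y : ℝ} (hy : y ≤ x₀) :
      jostWeight γ C₀ x₀ z r y = rexp ((‖r‖ + 2 * ‖z‖ + K) * (x₀ - y)) := by
    rw [jostWeight, max_eq_left (sub_nonneg.2 hy)]
  have hfb (y : ℝ) (hy : y ≤ x₀) : ‖potentialAction V₁ V₂ y (u y)‖ ≤
      C₀ * M * rexp ((‖r‖ + 2 * ‖z‖ + K) * (x₀ - y)) := by
    have hVy : |V₁ y| + |V₂ y| ≤ C₀ := (hV.bound y).trans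
      (mul_le_of_le_one_right hC₀ (Real.exp_le_one_iff.2 (by nlinarith [abs_nonneg y])))
    calc _ ≤ (|V₁ y| + |V₂ y|) * ‖u y‖ := norm_potentialAction_le _ _
      _ ≤ C₀ * (M * jostWeight γ C₀ x₀ z r y) := by gcongr; exact hM y
      _ = _ := by rw [hW hy, mul_assoc]
  have hgap : (2 / γ + 2) * (C₀ * M) / K ≤ M / 4 := by
    rw [div_le_div_iff₀ (by linarith) (by norm_num), hK]
    linarith
  rw [hW hx]
  refine (hz.norm_jostResolvent_le_of_le hx₀ hK₁ le_rfl (hV.continuous_potentialAction hu)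
    (hV.norm_potentialAction_le_of_le hx₀ hM) hfb hx).trans ?_
  gcongr
  linarith [hforward (le_refl x₀)]

end DecayingPotential

/-- The right-hand side of the integral equation for the amplitude of the Jost solution. -/
def jostOperator (x₀ : ℝ) (root : ℂ → ℂ) (V₁ V₂ : ℝ → ℝ) (v : ℝ → ℂ → ℂ × ℂ) (x : ℝ) (z : ℂ) :
    ℂ × ℂ :=
  (1, 0) + jostResolvent x₀ z (root z) (fun y => potentialAction V₁ V₂ y (v y z)) x

variable {Ω : Set ℂ} {root : ℂ → ℂ}

theorem continuousOn_jostWeight (hd : SpectralDomain γ η Ω root) :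
    ContinuousOn (fun q : ℝ × ℂ => jostWeight γ C₀ x₀ q.2 (root q.2) q.1) (univ ×ˢ Ω) := by
  have hroot : ContinuousOn (fun q : ℝ × ℂ => root q.2) (univ ×ˢ Ω) :=
    hd.differentiableOn.continuousOn.comp continuousOn_snd fun _ hq => hq.2
  have hmax : ContinuousOn (fun q : ℝ × ℂ => max (x₀ - q.1) 0) (univ ×ˢ Ω) :=
    Continuous.continuousOn (by fun_prop)
  exact (((hroot.norm.add (continuousOn_snd.norm.const_smul (2 : ℝ))).add
    continuousOn_const).mul hmax).rexp

theorem DecayingPotential.one_le_jostWeight (hV : DecayingPotential γ C₀ V₁ V₂) (hγ : 0 < γ)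
    (x : ℝ) : 1 ≤ jostWeight γ C₀ x₀ z r x := by
  have := hV.nonneg
  exact Real.one_le_exp (by positivity)

theorem exists_jostOperator_fixedPoint (hd : SpectralDomain γ η Ω root)
    (hV : DecayingPotential γ C₀ V₁ V₂) (hx₀ : 0 ≤ x₀)
    (hsmall : ∀ z ∈ Ω, jostConst γ η * (C₀ * rexp (-γ * x₀)) ≤ (1 + ‖z‖) / 4) :
    ∃ w, WeightedHolFamily Ω (fun x z => jostWeight γ C₀ x₀ z (root z) x) w ∧
      ∀ x, ∀ z ∈ Ω, jostOperator x₀ root V₁ V₂ w x z = w x z := by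
  have hbound {v : ℝ → ℂ → ℂ × ℂ} {M : ℝ}
      (hM : ∀ x, ∀ z ∈ Ω, ‖v x z‖ ≤ M * jostWeight γ C₀ x₀ z (root z) x) (y : ℝ) (hy : x₀ ≤ y)
      (z : ℂ) (hz : z ∈ Ω) :=
    hV.norm_potentialAction_le_of_le (u := fun x => v x z) hx₀ (fun x => hM x z hz) y hy
  refine WeightedHolFamily.exists_fixedPoint hd.isOpen (continuousOn_jostWeight hd) ?_ ?_
  · rintro v ⟨hv, M, hM⟩
    refine ⟨(HolFamily.of_continuous continuous_const).add (hd.holFamily_jostResolvent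
      (hv.potentialAction hV.continuous_fst hV.continuous_snd) (hbound hM)), 1 + M / 2,
      fun x z hz => (norm_add_le _ _).trans ?_⟩
    rw [add_mul]
    refine add_le_add ?_ (hV.norm_jostResolvent_potentialAction_le (hd.spectralPoint z hz) hx₀
      (hsmall z hz) (hv.continuous hz) (fun x => hM x z hz) x)
    simpa using hV.one_le_jostWeight hd.pos x
  · rintro u v M ⟨hu, Mu, hMu⟩ ⟨hv, Mv, hMv⟩ hM x z hz
    have hcontr := hV.norm_jostResolvent_potentialAction_le (hd.spectralPoint z hz) hx₀
      (hsmall z hz) ((hu.continuous hz).sub (hv.continuous hz)) (fun x => hM x z hz) x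
    simp only [Pi.sub_apply, potentialAction_sub] at hcontr
    rwa [(hd.spectralPoint z hz).jostResolvent_sub
      (hV.continuous_potentialAction (hu.continuous hz)) (fun y hy => hbound hMu y hy z hz)
      (hV.continuous_potentialAction (hv.continuous hz)) (fun y hy => hbound hMv y hy z hz),
      ← add_sub_add_left_eq_sub _ _ ((1, 0) : ℂ × ℂ)] at hcontr

theorem exists_amplitudeFamily (hd : SpectralDomain γ η Ω root)
    (hV : DecayingPotential γ C₀ V₁ V₂) (hx₀ : 0 ≤ x₀)
    (hsmall : ∀ z ∈ Ω, jostConst γ η * (C₀ * rexp (-γ * x₀)) ≤ (1 + ‖z‖) / 4) :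
    ∃ w w', AmplitudeFamily V₁ V₂ Ω w w' ∧ ∃ C, ∀ x, x₀ ≤ x → ∀ z ∈ Ω,
      (1 + ‖z‖) * ‖w x z - (1, 0)‖ ≤ C * rexp (-γ * x) ∧ ‖w' x z‖ ≤ C * rexp (-γ * x) := by
  obtain ⟨w, ⟨hw, M, hM⟩, hfix⟩ := exists_jostOperator_fixedPoint hd hV hx₀ hsmall
  let F (x : ℝ) (z : ℂ) : ℂ × ℂ := potentialAction V₁ V₂ x (w x z)
  have hF : HolFamily Ω F := hw.potentialAction hV.continuous_fst hV.continuous_snd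
  have hFb (x : ℝ) (hx : x₀ ≤ x) (z : ℂ) (hz : z ∈ Ω) : ‖F x z‖ ≤ C₀ * M * rexp (-γ * x) :=
    hV.norm_potentialAction_le_of_le (u := fun x => w x z) hx₀ (fun x => hM x z hz) x hx
  have hweq (x : ℝ) (z : ℂ) (hz : z ∈ Ω) :
      w x z = (1, 0) + jostResolvent x₀ z (root z) (fun y => F y z) x := (hfix x z hz).symm
  refine ⟨w, fun x z => jostResolventDeriv x₀ z (root z) (fun y => F y z) x,
    ⟨hw, hd.holFamily_jostResolventDeriv hF hFb, fun z hz => ⟨fun x => ?_, fun x => ?_⟩⟩,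
    2 * jostConst γ η * (C₀ * M), fun x hx z hz => ?_⟩
  · rw [funext fun x => hweq x z hz]
    exact ((hd.spectralPoint z hz).hasDerivAt_jostResolvent (hF.continuous hz)
      (fun y hy => hFb y hy z hz) x).const_add _
  · have hsnd : (w x z).2 = (jostResolvent x₀ z (root z) (fun y => F y z) x).2 := by
      simp [hweq x z hz]
    rw [hsnd]
    exact (hd.spectralPoint z hz).hasDerivAt_jostResolventDeriv (hF.continuous hz)
      (fun y hy => hFb y hy z hz) x
  · have hA := (hd.spectralPoint z hz).jostConst_nonneg
    have hnonneg := (norm_nonneg _).trans (hFb x hx z hz)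
    have hle := (hd.spectralPoint z hz).norm_jostResolvent_le (hF.continuous hz)
      (fun y hy => hFb y hy z hz) hx
    have hle' := (hd.spectralPoint z hz).norm_jostResolventDeriv_le (hF.continuous hz)
      (fun y hy => hFb y hy z hz) hx
    rw [hweq x z hz, add_sub_cancel_left, mul_assoc (2 * _)]
    exact ⟨hle.trans (mul_le_mul_of_nonneg_right (by linarith) hnonneg), hle'⟩

end Amplitude

section Symbols

variable {E F : Type*} [NormedAddCommGroup E] [NormedAddCommGroup F] {Ω : Set ℂ}
  {x₀ δ δ' m m' : ℝ} {n : ℕ} {g h : ℝ → ℂ → E}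

/-- The bound `‖g(x, z)‖ ≤ C (1 + |z|)^m e^{-δ x}` for `x ≥ x₀` and `z ∈ Ω`. -/
def SymbolBound (Ω : Set ℂ) (x₀ δ m : ℝ) (g : ℝ → ℂ → E) : Prop :=
  ∃ C, ∀ x, x₀ ≤ x → ∀ z ∈ Ω, ‖g x z‖ ≤ C * ((1 + ‖z‖) ^ m * rexp (-δ * x))

namespace SymbolBound

theorem mono (hx₀ : 0 ≤ x₀) (hm : m ≤ m') (hδ : δ' ≤ δ) (hg : SymbolBound Ω x₀ δ m g) :
    SymbolBound Ω x₀ δ' m' g := by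
  obtain ⟨C, hC⟩ := hg
  refine ⟨|C|, fun x hx z hz => (hC x hx z hz).trans ?_⟩
  have hx' := hx₀.trans hx
  gcongr
  · exact le_abs_self C
  · linarith [norm_nonneg z]

theorem add (hg : SymbolBound Ω x₀ δ m g) (hh : SymbolBound Ω x₀ δ m h) :
    SymbolBound Ω x₀ δ m fun x z => g x z + h x z := by
  obtain ⟨C, hC⟩ := hg
  obtain ⟨D, hD⟩ := hh
  refine ⟨C + D, fun x hx z hz => (norm_add_le _ _).trans ?_⟩
  rw [add_mul]
  exact add_le_add (hC x hx z hz) (hD x hx z hz)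

variable [NormedSpace ℂ E] [NormedSpace ℂ F]

theorem smul {a : ℝ → ℂ → ℂ} (ha : SymbolBound Ω x₀ δ' m' a) (hg : SymbolBound Ω x₀ δ m g) :
    SymbolBound Ω x₀ (δ' + δ) (m' + m) fun x z => a x z • g x z := by
  obtain ⟨C, hC⟩ := ha
  obtain ⟨D, hD⟩ := hg
  refine ⟨C * D, fun x hx z hz => ?_⟩
  calc ‖a x z • g x z‖
      ≤ C * ((1 + ‖z‖) ^ m' * rexp (-δ' * x)) * (D * ((1 + ‖z‖) ^ m * rexp (-δ * x))) := by
        rw [norm_smul]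
        exact mul_le_mul (hC x hx z hz) (hD x hx z hz) (norm_nonneg _)
          ((norm_nonneg _).trans (hC x hx z hz))
    _ = _ := by
        rw [Real.rpow_add (by positivity), neg_add, add_mul, Real.exp_add]
        ring

theorem clm_comp (L : E →L[ℂ] F) (hg : SymbolBound Ω x₀ δ m g) :
    SymbolBound Ω x₀ δ m fun x z => L (g x z) := by
  obtain ⟨C, hC⟩ := hg
  refine ⟨‖L‖ * C, fun x hx z hz => ?_⟩
  rw [mul_assoc]
  exact L.le_opNorm_of_le (hC x hx z hz)

theorem ofReal {V : ℝ → ℝ} (hm : 0 ≤ m)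
    (hb : ∃ C, ∀ x, x₀ ≤ x → |V x| ≤ C * rexp (-δ * x)) :
    SymbolBound Ω x₀ δ m fun x _ => (V x : ℂ) := by
  obtain ⟨C, hC⟩ := hb
  refine ⟨C, fun x hx z _ => ?_⟩
  have hVx : ‖(V x : ℂ)‖ ≤ C * rexp (-δ * x) := by simpa using hC x hx
  calc _ ≤ C * rexp (-δ * x) := hVx
    _ ≤ (1 + ‖z‖) ^ m * (C * rexp (-δ * x)) := le_mul_of_one_le_left
        ((norm_nonneg _).trans hVx) (Real.one_le_rpow (by linarith [norm_nonneg z]) hm)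
    _ = _ := by ring

end SymbolBound

variable [NormedSpace ℂ E] [NormedSpace ℂ F]

/-- Holomorphic families of symbols of order `m` and decay rate `δ` on `[x₀, ∞)`, with `n`
derivatives in `x`, each of which raises the order by one. -/
def SymbolFamily (Ω : Set ℂ) (x₀ δ : ℝ) : ℕ → ℝ → (ℝ → ℂ → E) → Prop
  | 0, m, g => HolFamily Ω g ∧ SymbolBound Ω x₀ δ m g
  | n + 1, m, g => (HolFamily Ω g ∧ SymbolBound Ω x₀ δ m g) ∧ ∃ g' : ℝ → ℂ → E,
      (∀ z ∈ Ω, ∀ x, HasDerivAt (fun x => g x z) (g' x z) x) ∧ SymbolFamily Ω x₀ δ n (m + 1) g'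

namespace SymbolFamily

theorem cnFamily (hg : SymbolFamily Ω x₀ δ n m g) : CnFamily Ω n g := by
  induction n generalizing m g with
  | zero => exact hg.1
  | succ n ih =>
    obtain ⟨hg, g', hd, hg'⟩ := hg
    exact ⟨hg.1, g', hd, ih hg'⟩

theorem of_succ (hg : SymbolFamily Ω x₀ δ (n + 1) m g) : SymbolFamily Ω x₀ δ n m g := by
  induction n generalizing m g with
  | zero => exact hg.1
  | succ n ih =>
    obtain ⟨hg, g', hd, hg'⟩ := hg
    exact ⟨hg, g', hd, ih hg'⟩

theorem mono (hx₀ : 0 ≤ x₀) (hm : m ≤ m') (hδ : δ' ≤ δ) (hg : SymbolFamily Ω x₀ δ n m g) :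
    SymbolFamily Ω x₀ δ' n m' g := by
  induction n generalizing m m' g with
  | zero => exact ⟨hg.1, hg.2.mono hx₀ hm hδ⟩
  | succ n ih =>
    obtain ⟨hg, g', hd, hg'⟩ := hg
    exact ⟨⟨hg.1, hg.2.mono hx₀ hm hδ⟩, g', hd, ih (by linarith) hg'⟩

theorem add (hg : SymbolFamily Ω x₀ δ n m g) (hh : SymbolFamily Ω x₀ δ n m h) :
    SymbolFamily Ω x₀ δ n m fun x z => g x z + h x z := by
  induction n generalizing m g h with
  | zero => exact ⟨hg.1.add hh.1, hg.2.add hh.2⟩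
  | succ n ih =>
    obtain ⟨hg, g', hgd, hg'⟩ := hg
    obtain ⟨hh, h', hhd, hh'⟩ := hh
    exact ⟨⟨hg.1.add hh.1, hg.2.add hh.2⟩, _,
      fun z hz x => (hgd z hz x).add (hhd z hz x), ih hg' hh'⟩

theorem smul {a : ℝ → ℂ → ℂ} (ha : SymbolFamily Ω x₀ δ' n m' a)
    (hg : SymbolFamily Ω x₀ δ n m g) :
    SymbolFamily Ω x₀ (δ' + δ) n (m' + m) fun x z => a x z • g x z := by
  induction n generalizing m m' a g with
  | zero => exact ⟨ha.1.smul hg.1, ha.2.smul hg.2⟩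
  | succ n ih =>
    have ha₀ := ha.of_succ
    have hg₀ := hg.of_succ
    obtain ⟨ha, a', had, ha'⟩ := ha
    obtain ⟨hg, g', hgd, hg'⟩ := hg
    refine ⟨⟨ha.1.smul hg.1, ha.2.smul hg.2⟩, _, fun z hz x => (had z hz x).smul (hgd z hz x),
      .add ?_ ?_⟩
    · exact add_assoc m' m 1 ▸ ih ha₀ hg'
    · exact add_right_comm m' 1 m ▸ ih ha' hg₀

theorem clm_comp (L : E →L[ℂ] F) (hg : SymbolFamily Ω x₀ δ n m g) :
    SymbolFamily Ω x₀ δ n m fun x z => L (g x z) := by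
  induction n generalizing m g with
  | zero => exact ⟨hg.1.clm_comp L, hg.2.clm_comp L⟩
  | succ n ih =>
    obtain ⟨hg, g', hd, hg'⟩ := hg
    exact ⟨⟨hg.1.clm_comp L, hg.2.clm_comp L⟩, _,
      fun z hz x => (L.restrictScalars ℝ).hasFDerivAt.comp_hasDerivAt x (hd z hz x), ih hg'⟩

theorem zero : SymbolFamily Ω x₀ δ n m fun _ _ => (0 : E) := by
  induction n generalizing m with
  | zero => exact ⟨.of_continuous continuous_const, 0, by simp⟩
  | succ n ih => exact ⟨⟨.of_continuous continuous_const, 0, by simp⟩, fun _ _ => 0,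
      fun _ _ x => hasDerivAt_const x 0, ih⟩

theorem of_differentiableOn {a : ℂ → E} {C : ℝ} (ha : DifferentiableOn ℂ a Ω)
    (hC : ∀ z ∈ Ω, ‖a z‖ ≤ C * (1 + ‖z‖) ^ m) : SymbolFamily Ω x₀ 0 n m fun _ z => a z := by
  have hbound : SymbolBound Ω x₀ 0 m fun _ z => a z := ⟨C, fun _ _ z hz => by simpa using hC z hz⟩
  cases n with
  | zero => exact ⟨.of_differentiableOn ha, hbound⟩
  | succ n => exact ⟨⟨.of_differentiableOn ha, hbound⟩, fun _ _ => 0,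
      fun z _ x => hasDerivAt_const x (a z), zero⟩

theorem of_contDiff {V : ℝ → ℝ} (hV : ContDiff ℝ ∞ V) (hm : 0 ≤ m)
    (hb : ∀ k, ∃ C, ∀ x, x₀ ≤ x → |iteratedDeriv k V x| ≤ C * rexp (-δ * x)) :
    SymbolFamily Ω x₀ δ n m fun x _ => (V x : ℂ) := by
  have hbound {m : ℝ} (hm : 0 ≤ m) {V : ℝ → ℝ} (hV : ContDiff ℝ ∞ V)
      (hb : ∀ k, ∃ C, ∀ x, x₀ ≤ x → |iteratedDeriv k V x| ≤ C * rexp (-δ * x)) :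
      SymbolFamily Ω x₀ δ 0 m fun x _ => (V x : ℂ) :=
    ⟨.of_continuous (Complex.continuous_ofReal.comp hV.continuous),
      .ofReal hm (by simpa only [iteratedDeriv_zero] using hb 0)⟩
  induction n generalizing m V with
  | zero => exact hbound hm hV hb
  | succ n ih =>
    have hV' := contDiff_infty_iff_deriv.1 hV
    refine ⟨hbound hm hV hb,
      fun x _ => ((deriv V x : ℝ) : ℂ), fun _ _ x => (hV'.1 x).hasDerivAt.ofReal_comp,
      ih hV'.2 (by linarith) fun k => ?_⟩
    simpa only [← iteratedDeriv_succ'] using hb (k + 1)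

protected theorem iteratedDeriv (hg : SymbolFamily Ω x₀ δ n m g) :
    SymbolFamily Ω x₀ δ 0 (m + n) fun x z => iteratedDeriv n (fun x => g x z) x := by
  induction n generalizing m g with
  | zero => simpa only [iteratedDeriv_zero, Nat.cast_zero, add_zero] using hg
  | succ n ih =>
    obtain ⟨-, g', hd, hg'⟩ := hg
    have heq (x : ℝ) (z : ℂ) (hz : z ∈ Ω) : iteratedDeriv (n + 1) (fun x => g x z) x =
        iteratedDeriv n (fun x => g' x z) x := by
      rw [iteratedDeriv_succ', funext fun x => (hd z hz x).deriv]
    obtain ⟨hhol, C, hC⟩ := ih hg'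
    refine ⟨hhol.congr heq, C, fun x hx z hz => ?_⟩
    simpa only [heq x z hz, Nat.cast_succ, add_assoc, add_comm (1 : ℝ)] using hC x hx z hz

end SymbolFamily

section Bootstrap

variable {Ω : Set ℂ} {x₀ γ : ℝ} {V₁ V₂ : ℝ → ℝ} {w w' : ℝ → ℂ → ℂ × ℂ}

theorem SymbolFamily.potentialAction {v : ℝ → ℂ → ℂ × ℂ} {n : ℕ}
    (hV₁ : SymbolFamily Ω x₀ γ n 0 fun x _ => (V₁ x : ℂ))
    (hV₂ : SymbolFamily Ω x₀ γ n 0 fun x _ => (V₂ x : ℂ)) (hv : SymbolFamily Ω x₀ 0 n 0 v) :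
    SymbolFamily Ω x₀ γ n 0 fun x z => potentialAction V₁ V₂ x (v x z) := by
  have hswap := hv.clm_comp (ContinuousLinearEquiv.prodComm ℂ ℂ ℂ).toContinuousLinearMap
  simpa only [add_zero] using! (hV₁.smul hv).add (hV₂.smul hswap)

theorem norm_two_mul_I_mul_le (z : ℂ) : ‖2 * Complex.I * z‖ ≤ 2 * (1 + ‖z‖) ^ (1 : ℝ) := by
  simp only [norm_mul, Complex.norm_ofNat, Complex.norm_I, mul_one, Real.rpow_one]
  linarith

theorem norm_two_mul_sq_add_two_le (z : ℂ) : ‖2 * z ^ 2 + 2‖ ≤ 2 * (1 + ‖z‖) ^ (2 : ℝ) := by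
  have h := norm_add_le (2 * z ^ 2) 2
  simp only [norm_mul, norm_pow, Complex.norm_ofNat] at h
  rw [Real.rpow_two]
  nlinarith [norm_nonneg z]

/-- The equation of the amplitude expresses `w''` through `w'` with a factor `z`, and through
`w - (1, 0)` with a factor `z²`, so each step of the induction gains one derivative in `x`. -/
theorem AmplitudeFamily.symbolFamily (hw : AmplitudeFamily V₁ V₂ Ω w w') (hx₀ : 0 ≤ x₀)
    (hγ : 0 ≤ γ) (hV₁ : ∀ n, SymbolFamily Ω x₀ γ n 0 fun x _ => (V₁ x : ℂ))
    (hV₂ : ∀ n, SymbolFamily Ω x₀ γ n 0 fun x _ => (V₂ x : ℂ))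
    (hb : SymbolBound Ω x₀ γ (-1) fun x z => w x z - (1, 0)) (hb' : SymbolBound Ω x₀ γ 0 w')
    (n : ℕ) : SymbolFamily Ω x₀ γ n (-1) (fun x z => w x z - (1, 0)) ∧
      SymbolFamily Ω x₀ γ n 0 w' := by
  have hsub : SymbolFamily Ω x₀ γ 0 (-1) fun x z => w x z - (1, 0) :=
    ⟨hw.holFamily.sub (.of_continuous continuous_const), hb⟩
  induction n with
  | zero => exact ⟨hsub, hw.holFamily_deriv, hb'⟩
  | succ n ih =>
    obtain ⟨hq, hq'⟩ := ih
    refine ⟨⟨hsub, w', fun z hz x => ((hw.isAmplitude z hz).hasDerivAt x).sub_const _,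
        by simpa using hq'⟩, ⟨hw.holFamily_deriv, hb'⟩, _,
      fun z hz => (hw.isAmplitude z hz).hasDerivAt_deriv,
      .add ?_ ?_⟩
    · have h₁ : SymbolFamily Ω x₀ 0 n 1 fun _ z => -(2 * Complex.I * z) :=
        .of_differentiableOn (by fun_prop) fun z _ => (norm_neg _).trans_le
          (norm_two_mul_I_mul_le z)
      have h₂ : SymbolFamily Ω x₀ 0 n 2 fun _ z => 2 * z ^ 2 + 2 :=
        .of_differentiableOn (by fun_prop) fun z _ => norm_two_mul_sq_add_two_le z
      have hsnd := (h₂.smul hq).clm_comp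
        ((ContinuousLinearMap.inr ℂ ℂ ℂ).comp (ContinuousLinearMap.snd ℂ ℂ ℂ))
      have hsum := ((h₁.smul hq').mono hx₀ (m' := 0 + 1) (by norm_num) (by simp)).add
        (hsnd.mono hx₀ (m' := 0 + 1) (δ' := γ) (by norm_num) (by simp))
      simpa using hsum
    · have hconst : SymbolFamily Ω x₀ 0 n 0 fun _ _ => ((1, 0) : ℂ × ℂ) :=
        .of_differentiableOn (differentiableOn_const _) (C := 1) fun z _ => by simp
      have hw₀ := (hq.mono hx₀ (by norm_num) hγ).add hconst
      simp only [sub_add_cancel] at hw₀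
      exact ((hV₁ n).potentialAction (hV₂ n) hw₀).mono hx₀ (by norm_num) le_rfl

end Bootstrap

end Symbols

section RealSpectrum

/-- The branch of `√(z² + 2)` with nonnegative real part. -/
def spectralRoot (z : ℂ) : ℂ := (z ^ 2 + 2) ^ (2⁻¹ : ℂ)

/-- Half-width of the strip around the real axis in which the amplitudes are holomorphic. -/
def stripWidth (γ : ℝ) : ℝ := min γ (√2 - γ) / 4

variable {γ η C₀ x₀ : ℝ} {z : ℂ} {V₁ V₂ : ℝ → ℝ} {Ω : Set ℂ} {root : ℂ → ℂ}

theorem stripWidth_pos (hγ : 0 < γ) (hγ' : γ < √2) : 0 < stripWidth γ :=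
  div_pos (lt_min hγ (sub_pos.2 hγ')) (by norm_num)

theorem sqrt_two_sub_le_re_spectralRoot (hz : |z.im| ≤ √2) :
    √2 - |z.im| ≤ (spectralRoot z).re := by
  have hsq : spectralRoot z ^ 2 = z ^ 2 + 2 := Complex.cpow_ofNat_inv_pow _ 2
  have hre := congrArg Complex.re hsq
  have hnonneg : 0 ≤ (spectralRoot z).re := by
    rw [spectralRoot, Complex.cpow_inv_two_re]
    exact Real.sqrt_nonneg _
  simp only [pow_two, Complex.mul_re, Complex.add_re, Complex.re_ofNat] at hre
  refine (sq_le_sq₀ (sub_nonneg.2 hz) hnonneg).1 ?_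
  nlinarith [sq_abs z.im, Real.sq_sqrt (zero_le_two (α := ℝ)), abs_nonneg z.im,
    mul_self_nonneg z.re, mul_self_nonneg (spectralRoot z).im]

theorem stripWidth_le (γ : ℝ) : stripWidth γ ≤ 1 / 4 := by
  unfold stripWidth
  linarith [min_le_left γ (√2 - γ), min_le_right γ (√2 - γ), Real.sqrt_two_lt_three_halves]

theorem one_add_norm_le_two_mul_norm_spectralRoot (hz : |z.im| ≤ 1) :
    1 + ‖z‖ ≤ 2 * ‖spectralRoot z‖ := by
  have hsq : spectralRoot z ^ 2 = z ^ 2 + 2 := Complex.cpow_ofNat_inv_pow _ 2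
  have hnorm : (z ^ 2 + 2).re ≤ ‖spectralRoot z‖ ^ 2 := by
    rw [← norm_pow, hsq]
    exact Complex.re_le_norm _
  have him : z.im ^ 2 ≤ 1 := (sq_le_one_iff_abs_le_one _).2 hz
  have hz2 : ‖z‖ ^ 2 = z.re ^ 2 + z.im ^ 2 := by
    rw [Complex.sq_norm, Complex.normSq_apply]
    ring
  simp only [pow_two z, Complex.mul_re, Complex.add_re, Complex.re_ofNat] at hnorm
  refine (sq_le_sq₀ (by positivity) (by positivity)).1 ?_
  nlinarith [sq_nonneg (‖z‖ - 1), sq_nonneg z.re]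

theorem spectralPoint_spectralRoot (hγ : 0 < γ) (hγ' : γ < √2) (hz : |z.im| < stripWidth γ) :
    SpectralPoint γ ((√2 - γ) / 2) z (spectralRoot z) := by
  have hleft : |z.im| ≤ γ / 4 := hz.le.trans (by unfold stripWidth; gcongr; exact min_le_left _ _)
  have hright : |z.im| ≤ (√2 - γ) / 4 :=
    hz.le.trans (by unfold stripWidth; gcongr; exact min_le_right _ _)
  have hroot := sqrt_two_sub_le_re_spectralRoot (z := z) (by linarith)
  have him := neg_le_abs z.im
  have hone : |z.im| ≤ 1 := by linarith [stripWidth_le γ]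
  have hre : (Complex.I * z).re = -z.im := by simp
  refine ⟨hγ, by linarith, ?_, Complex.cpow_ofNat_inv_pow _ 2, ?_, ?_,
    one_add_norm_le_two_mul_norm_spectralRoot hone⟩
  · rw [mul_assoc, Complex.mul_re, hre]
    simp only [Complex.re_ofNat, Complex.im_ofNat]
    linarith
  · rw [Complex.sub_re, hre]
    linarith
  · rw [Complex.add_re, hre]
    linarith [le_abs_self z.im]

theorem spectralDomain_spectralRoot (hγ : 0 < γ) (hγ' : γ < √2) (hΩ : IsOpen Ω)
    (hstrip : ∀ z ∈ Ω, |z.im| < stripWidth γ) :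
    SpectralDomain γ ((√2 - γ) / 2) Ω spectralRoot where
  pos := hγ
  isOpen := hΩ
  differentiableOn z hz := by
    have him : z.im ^ 2 < 1 :=
      (sq_lt_one_iff_abs_lt_one _).2 (by linarith [hstrip z hz, stripWidth_le γ])
    have hslit : z ^ 2 + 2 ∈ Complex.slitPlane := by
      refine .inl ?_
      simp only [pow_two z, Complex.mul_re, Complex.add_re, Complex.re_ofNat]
      nlinarith [sq_nonneg z.re]
    have hpoly : DifferentiableAt ℂ (fun z : ℂ => z ^ 2 + 2) z := by fun_prop
    exact (hpoly.cpow_const hslit).differentiableWithinAt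
  spectralPoint z hz := spectralPoint_spectralRoot hγ hγ' (hstrip z hz)

/-- `w` is a holomorphic family of amplitudes of Jost solutions: `e^{izx} w(x, z)` solves
`ℋf = (1 + z²) f` for `z ∈ Ω`, and `w - (1, 0)` is a symbol of order `-1` on `[x₀, ∞)`. -/
structure JostFamily (γ x₀ : ℝ) (V₁ V₂ : ℝ → ℝ) (Ω : Set ℂ) (w : ℝ → ℂ → ℂ × ℂ) : Prop where
  isAmplitude : ∀ z ∈ Ω, ∃ u', IsAmplitude V₁ V₂ z (fun x => w x z) u'
  symbolFamily : ∀ n, SymbolFamily Ω x₀ γ n (-1) fun x z => w x z - (1, 0)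

theorem exists_jostFamily (hd : SpectralDomain γ η Ω root) (hV₁ : ContDiff ℝ ∞ V₁)
    (hV₂ : ContDiff ℝ ∞ V₂) (hV : DecayingPotential γ C₀ V₁ V₂)
    (hdecay : ∀ k, ∃ C, ∀ x, |iteratedDeriv k V₁ x| + |iteratedDeriv k V₂ x| ≤ C * rexp (-γ * |x|))
    (hx₀ : 0 ≤ x₀)
    (hsmall : ∀ z ∈ Ω, jostConst γ η * (C₀ * rexp (-γ * x₀)) ≤ (1 + ‖z‖) / 4) :
    ∃ w, JostFamily γ x₀ V₁ V₂ Ω w := by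
  obtain ⟨w, w', hw, C, hC⟩ := exists_amplitudeFamily hd hV hx₀ hsmall
  have hb : SymbolBound Ω x₀ γ (-1) fun x z => w x z - (1, 0) := by
    refine ⟨C, fun x hx z hz => ?_⟩
    rw [Real.rpow_neg_one, mul_left_comm, ← div_eq_inv_mul, le_div_iff₀' (by positivity)]
    exact (hC x hx z hz).1
  have hb' : SymbolBound Ω x₀ γ 0 w' := ⟨C, fun x hx z hz => by simpa using (hC x hx z hz).2⟩
  have hV₁n (n : ℕ) : SymbolFamily Ω x₀ γ n 0 fun x _ => (V₁ x : ℂ) :=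
    .of_contDiff hV₁ le_rfl fun k => (hdecay k).imp fun C hC x hx => by
      simpa only [abs_of_nonneg (hx₀.trans hx)] using
        (le_add_of_nonneg_right (abs_nonneg _)).trans (hC x)
  have hV₂n (n : ℕ) : SymbolFamily Ω x₀ γ n 0 fun x _ => (V₂ x : ℂ) :=
    .of_contDiff hV₂ le_rfl fun k => (hdecay k).imp fun C hC x hx => by
      simpa only [abs_of_nonneg (hx₀.trans hx)] using
        (le_add_of_nonneg_left (abs_nonneg _)).trans (hC x)
  exact ⟨w, fun z hz => ⟨_, hw.isAmplitude z hz⟩,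
    fun n => (hw.symbolFamily hx₀ hd.pos.le hV₁n hV₂n hb hb' n).1⟩

/-- The contraction needs a small potential on `[x₀, ∞)` relative to `1 + |z|`: this holds on the
whole strip if `x₀` is large, and down to `x₀ = 0` if `|Re z|` is large. -/
theorem exists_jostFamily_strip (hγ : 0 < γ) (hγ' : γ < √2) (hV₁ : ContDiff ℝ ∞ V₁)
    (hV₂ : ContDiff ℝ ∞ V₂)
    (hdecay : ∀ k, ∃ C, ∀ x, |iteratedDeriv k V₁ x| + |iteratedDeriv k V₂ x| ≤
      C * rexp (-γ * |x|)) :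
    ∃ x₀ L, 0 ≤ x₀ ∧ 0 ≤ L ∧ (∃ w, JostFamily γ x₀ V₁ V₂ {z | |z.im| < stripWidth γ} w) ∧
      ∃ w, JostFamily γ 0 V₁ V₂ {z | |z.im| < stripWidth γ ∧ L < |z.re|} w := by
  obtain ⟨C₀, hC₀⟩ := hdecay 0
  have hV : DecayingPotential γ C₀ V₁ V₂ := ⟨hV₁.continuous, hV₂.continuous, hC₀⟩
  set B := 4 * (jostConst γ ((√2 - γ) / 2) * C₀)
  have hB₀ : 0 ≤ B := by
    have hJ := (spectralPoint_spectralRoot hγ hγ' (z := 0) (by simpa using stripWidth_pos hγ hγ'))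
      |>.jostConst_nonneg
    have := hV.nonneg
    positivity
  have hBexp : B * rexp (-B) ≤ 1 := by
    rw [Real.exp_neg, ← div_eq_mul_inv, div_le_one (exp_pos _)]
    linarith [Real.add_one_le_exp B]
  have hopen : IsOpen {z : ℂ | |z.im| < stripWidth γ} := isOpen_lt (by fun_prop) continuous_const
  have hopen' : IsOpen {z : ℂ | |z.im| < stripWidth γ ∧ B < |z.re|} :=
    hopen.inter (isOpen_lt continuous_const (by fun_prop) : IsOpen {z : ℂ | B < |z.re|})
  refine ⟨B / γ, B, by positivity, hB₀,
    exists_jostFamily (spectralDomain_spectralRoot hγ hγ' hopen fun z hz => hz) hV₁ hV₂ hV hdecay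
      (by positivity) fun z _ => ?_,
    exists_jostFamily (spectralDomain_spectralRoot hγ hγ' hopen' fun z hz => hz.1) hV₁ hV₂ hV
      hdecay le_rfl fun z hz => ?_⟩
  · rw [show -γ * (B / γ) = -B by field_simp, ← mul_assoc]
    linarith [norm_nonneg z]
  · rw [mul_zero, Real.exp_zero, mul_one]
    linarith [hz.2, Complex.abs_re_le_norm z]

end RealSpectrum

section RealSymbols

variable {E : Type*} [NormedAddCommGroup E] [NormedSpace ℝ E] {U U' : Set ℝ} {x₀ x₁ γ m : ℝ}
  {g h : ℝ → ℝ → E}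

/-- Symbols of order `m` in a real parameter `t ∈ U`: every `t`-derivative of `h(x, ·)` is bounded
by a multiple of `μ(t)^m e^{-γx}` for `x ≥ x₀`. -/
structure RealSymbol (U : Set ℝ) (x₀ γ m : ℝ) (h : ℝ → ℝ → E) : Prop where
  contDiffOn : ∀ x, ContDiffOn ℝ ∞ (h x) U
  bound : ∀ l, ∃ C, ∀ t ∈ U, ∀ x, x₀ ≤ x →
    ‖iteratedDeriv l (h x) t‖ ≤ C * (mu t ^ m * rexp (-γ * x))

theorem mu_pos (t : ℝ) : 0 < mu t := Real.sqrt_pos.2 (by positivity)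

theorem contDiff_smul_of_tsupport_subset {F : Type*} [NormedAddCommGroup F] [NormedSpace ℝ F]
    {s : Set F} {n : ℕ∞} {ψ : F → ℝ} {f : F → E} (hψ : ContDiff ℝ n ψ) (hs : IsOpen s)
    (hsupp : tsupport ψ ⊆ s) (hf : ContDiffOn ℝ n f s) : ContDiff ℝ n fun y => ψ y • f y := by
  rw [contDiff_iff_contDiffAt]
  intro y
  by_cases hy : y ∈ tsupport ψ
  · exact hψ.contDiffAt.smul (hf.contDiffAt (hs.mem_nhds (hsupp hy)))
  · refine (contDiffAt_const (c := 0)).congr_of_eventuallyEq ?_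
    filter_upwards [notMem_tsupport_iff_eventuallyEq.1 hy] with y' hy'
    rw [hy', Pi.zero_apply, zero_smul]

theorem norm_iteratedDeriv_smul_le {ψ : ℝ → ℝ} {f : ℝ → E} {t : ℝ} (l : ℕ)
    (hψ : ContDiff ℝ ∞ ψ) (hU : IsOpen U) (hf : ContDiffOn ℝ ∞ f U) (ht : t ∈ U) :
    ‖iteratedDeriv l (fun t => ψ t • f t) t‖ ≤ ∑ i ∈ Finset.range (l + 1),
      l.choose i * ‖iteratedDeriv i ψ t‖ * ‖iteratedDeriv (l - i) f t‖ := by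
  have hleibniz := norm_iteratedFDerivWithin_smul_le hψ.contDiffOn hf hU.uniqueDiffOn ht
    (n := l) (by exact_mod_cast le_top)
  simpa only [iteratedFDerivWithin_of_isOpen _ hU ht, norm_iteratedFDeriv_eq_norm_iteratedDeriv]
    using hleibniz

namespace RealSymbol

theorem mono (hh : RealSymbol U x₀ γ m h) (hU : U' ⊆ U) (hx : x₀ ≤ x₁) :
    RealSymbol U' x₁ γ m h :=
  ⟨fun x => (hh.1 x).mono hU,
    fun l => (hh.2 l).imp fun _ hC t ht x hx' => hC t (hU ht) x (hx.trans hx')⟩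

theorem congr (hh : RealSymbol U x₀ γ m h) (hU : IsOpen U) (hgh : ∀ x, ∀ t ∈ U, g x t = h x t) :
    RealSymbol U x₀ γ m g := by
  refine ⟨fun x => (hh.1 x).congr (hgh x), fun l => (hh.2 l).imp fun C hC t ht x hx => ?_⟩
  have heq : g x =ᶠ[𝓝 t] h x := eventually_of_mem (hU.mem_nhds ht) (hgh x)
  rw [heq.iteratedDeriv_eq]
  exact hC t ht x hx

theorem add (hg : RealSymbol U x₀ γ m g) (hh : RealSymbol U x₀ γ m h) (hU : IsOpen U) :
    RealSymbol U x₀ γ m fun x t => g x t + h x t := by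
  refine ⟨fun x => (hg.1 x).add (hh.1 x), fun l => ?_⟩
  obtain ⟨C, hC⟩ := hg.2 l
  obtain ⟨D, hD⟩ := hh.2 l
  refine ⟨C + D, fun t ht x hx => ?_⟩
  have hsmooth {f : ℝ → E} (hf : ContDiffOn ℝ ∞ f U) : ContDiffAt ℝ l f t :=
    (hf.contDiffAt (hU.mem_nhds ht)).of_le (by exact_mod_cast le_top)
  rw [iteratedDeriv_fun_add (hsmooth (hg.1 x)) (hsmooth (hh.1 x)), add_mul]
  exact norm_add_le_of_le (hC t ht x hx) (hD t ht x hx)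

theorem neg (hh : RealSymbol U x₀ γ m h) : RealSymbol U x₀ γ m fun x t => -h x t := by
  refine ⟨fun x => (hh.1 x).neg, fun l => (hh.2 l).imp fun C hC t ht x hx => ?_⟩
  rw [iteratedDeriv_fun_neg, norm_neg]
  exact hC t ht x hx

theorem cutoff {ψ : ℝ → ℝ} (hh : RealSymbol U x₀ γ m h) (hU : IsOpen U) (hψ : ContDiff ℝ ∞ ψ)
    (hsupp : tsupport ψ ⊆ U) (hbound : ∀ i, ∃ M, ∀ t, ‖iteratedDeriv i ψ t‖ ≤ M) :
    RealSymbol univ x₀ γ m fun x t => ψ t • h x t := by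
  refine ⟨fun x => (contDiff_smul_of_tsupport_subset hψ hU hsupp (hh.1 x)).contDiffOn,
    fun l => ?_⟩
  choose M hM using hbound
  choose D hD using hh.2
  refine ⟨∑ i ∈ Finset.range (l + 1), l.choose i * M i * |D (l - i)|, fun t _ x hx => ?_⟩
  have hE : 0 ≤ mu t ^ m * rexp (-γ * x) := by
    have := mu_pos t
    positivity
  have hM₀ (i : ℕ) : 0 ≤ M i := (norm_nonneg _).trans (hM i t)
  by_cases ht : t ∈ tsupport ψ
  · rw [Finset.sum_mul]
    refine (norm_iteratedDeriv_smul_le l hψ hU (hh.1 x) (hsupp ht)).trans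
      (Finset.sum_le_sum fun i _ => ?_)
    rw [mul_assoc _ |D (l - i)|]
    gcongr
    · exact mul_nonneg (by positivity) (hM₀ i)
    · exact hM i t
    · exact (hD (l - i) t (hsupp ht) x hx).trans (by gcongr; exact le_abs_self _)
  · have hzero : (fun t => ψ t • h x t) =ᶠ[𝓝 t] fun _ => 0 := by
      filter_upwards [notMem_tsupport_iff_eventuallyEq.1 ht] with s hs
      rw [hs, Pi.zero_apply, zero_smul]
    rw [hzero.iteratedDeriv_eq, iteratedDeriv_fun_const_zero, norm_zero]
    exact mul_nonneg (Finset.sum_nonneg fun i _ => by have := hM₀ i; positivity) hE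

end RealSymbol

theorem exists_contDiff_cutoff {a b : ℝ} (ha : 0 ≤ a) (hab : a < b) :
    ∃ ψ : ℝ → ℝ, ContDiff ℝ ∞ ψ ∧ (∀ i, ∃ M, ∀ t, ‖iteratedDeriv i ψ t‖ ≤ M) ∧
      tsupport ψ ⊆ {t | a < |t|} ∧ ∀ t, b ≤ |t| → ψ t = 1 := by
  let bump : ContDiffBump (0 : ℝ) := ⟨(a + b) / 2, b, by linarith, by linarith⟩
  have hbump : ContDiff ℝ ∞ bump := bump.contDiff
  refine ⟨fun t => 1 - bump t, contDiff_const.sub hbump, fun i => ?_, ?_, fun t ht => ?_⟩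
  · cases i with
    | zero => exact ⟨1, fun t => by
        rw [iteratedDeriv_zero, Real.norm_eq_abs, abs_le]
        constructor <;> linarith [bump.nonneg (x := t), bump.le_one (x := t)]⟩
    | succ i =>
      obtain ⟨M, hM⟩ := (bump.hasCompactSupport.iteratedFDeriv (𝕜 := ℝ) (i + 1))
        |>.exists_bound_of_continuous (hbump.continuous_iteratedFDeriv (by exact_mod_cast le_top))
      refine ⟨M, fun t => ?_⟩
      rw [iteratedDeriv_const_sub (Nat.succ_pos i), iteratedDeriv_neg, norm_neg,
        ← norm_iteratedFDeriv_eq_norm_iteratedDeriv]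
      exact hM t
  · have hclosed : IsClosed {t : ℝ | (a + b) / 2 ≤ |t|} :=
      isClosed_le continuous_const continuous_abs
    refine (closure_minimal (fun t ht => ?_) hclosed).trans fun t (ht : (a + b) / 2 ≤ |t|) =>
      show a < |t| by linarith
    by_contra hlt
    refine ht (sub_eq_zero.2 (bump.one_of_mem_closedBall ?_).symm)
    simpa using (not_le.1 hlt).le
  · simp only [bump.zero_of_le_dist (show b ≤ dist t 0 by simpa using ht), sub_zero]

end RealSymbols

section Restriction

variable {E : Type*} [NormedAddCommGroup E] [NormedSpace ℂ E] {Ω : Set ℂ} {U : Set ℝ}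
  {x₀ γ m ρ : ℝ} {g : ℝ → ℂ → E}

theorem rpow_le_two_rpow_abs_mul_rpow {a b : ℝ} (ha : 0 < a) (hb : 0 < b) (hab : a ≤ 2 * b)
    (hba : b ≤ 2 * a) (s : ℝ) : a ^ s ≤ 2 ^ |s| * b ^ s := by
  rcases le_total 0 s with hs | hs
  · rw [abs_of_nonneg hs, ← Real.mul_rpow zero_le_two hb.le]
    exact Real.rpow_le_rpow ha.le hab hs
  · calc a ^ s ≤ (b / 2) ^ s :=
          Real.rpow_le_rpow_of_nonpos (by positivity) (by linarith) hs
      _ = 2 ^ |s| * b ^ s := by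
          rw [abs_of_nonpos hs, Real.div_rpow hb.le zero_le_two, Real.rpow_neg zero_le_two]
          field_simp

theorem one_add_norm_rpow_le_mu_rpow {z : ℂ} {t : ℝ} (hz : ‖z - t‖ ≤ 1 / 4) (s : ℝ) :
    (1 + ‖z‖) ^ s ≤ 2 ^ |s| * mu t ^ s := by
  have hsq : mu t ^ 2 = ‖(t : ℂ)‖ ^ 2 + 2 := by
    rw [mu, Real.sq_sqrt (by positivity), Complex.norm_real, Real.norm_eq_abs, sq_abs]
  have hle : ‖z‖ ≤ ‖(t : ℂ)‖ + 1 / 4 := by linarith [norm_sub_norm_le z t]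
  have hge : ‖(t : ℂ)‖ ≤ ‖z‖ + 1 / 4 := by
    linarith [norm_sub_norm_le (t : ℂ) z, norm_sub_rev z (t : ℂ)]
  have hμ := mu_pos t
  have hn := norm_nonneg (t : ℂ)
  have hn' := norm_nonneg z
  refine rpow_le_two_rpow_abs_mul_rpow (by positivity) hμ ?_ ?_ s
  · refine (pow_le_pow_iff_left₀ (by positivity) (by positivity) two_ne_zero).1 ?_
    nlinarith [sq_nonneg (‖(t : ℂ)‖ - 1)]
  · refine (pow_le_pow_iff_left₀ (by positivity) (by positivity) two_ne_zero).1 ?_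
    nlinarith

variable [CompleteSpace E]

theorem iteratedDeriv_comp_ofReal {f : ℂ → E} (hΩ : IsOpen Ω) (hf : DifferentiableOn ℂ f Ω)
    (l : ℕ) {t : ℝ} (ht : (t : ℂ) ∈ Ω) :
    iteratedDeriv l (fun s : ℝ => f s) t = iteratedDeriv l f t := by
  induction l generalizing f with
  | zero => simp only [iteratedDeriv_zero]
  | succ l ih =>
    have hderiv : deriv (fun s : ℝ => f s) =ᶠ[𝓝 t] fun s : ℝ => deriv f s := by
      filter_upwards [(hΩ.preimage Complex.continuous_ofReal).mem_nhds ht] with s hs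
      exact (hasDerivAt_comp_ofReal (hf.differentiableAt (hΩ.mem_nhds hs)).hasDerivAt).deriv
    rw [iteratedDeriv_succ', hderiv.iteratedDeriv_eq, iteratedDeriv_succ', ih (hf.deriv hΩ)]

/-- Cauchy's estimates on discs of radius `ρ` around the points of `U`. -/
theorem SymbolFamily.realSymbol (hg : SymbolFamily Ω x₀ γ 0 m g) (hΩ : IsOpen Ω) (hρ : 0 < ρ)
    (hρ' : ρ ≤ 1 / 4) (hU : ∀ t ∈ U, Metric.closedBall (t : ℂ) ρ ⊆ Ω) :
    RealSymbol U x₀ γ m fun x t => g x t := by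
  have hmem (t : ℝ) (ht : t ∈ U) : (t : ℂ) ∈ Ω := hU t ht (Metric.mem_closedBall_self hρ.le)
  refine ⟨fun x => ?_, fun l => ?_⟩
  · exact (((hg.1.2 x).contDiffOn hΩ).restrict_scalars ℝ).comp
      Complex.ofRealCLM.contDiff.contDiffOn hmem
  obtain ⟨C, hC⟩ := hg.2
  refine ⟨l.factorial * (|C| * 2 ^ |m|) / ρ ^ l, fun t ht x hx => ?_⟩
  rw [iteratedDeriv_comp_ofReal hΩ (hg.1.2 x) l (hmem t ht)]
  have hdiff : DiffContOnCl ℂ (g x) (Metric.ball (t : ℂ) ρ) :=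
    ((hg.1.2 x).mono (Metric.closure_ball_subset_closedBall.trans (hU t ht))).diffContOnCl
  have hsphere (z : ℂ) (hz : z ∈ Metric.sphere (t : ℂ) ρ) :
      ‖g x z‖ ≤ |C| * (2 ^ |m| * mu t ^ m * rexp (-γ * x)) := by
    refine (hC x hx z (hU t ht (Metric.sphere_subset_closedBall hz))).trans ?_
    have hz' : ‖z - t‖ ≤ 1 / 4 := (mem_sphere_iff_norm.1 hz).trans_le hρ'
    gcongr
    · exact le_abs_self C
    · exact one_add_norm_rpow_le_mu_rpow hz' m
  refine (Complex.norm_iteratedDeriv_le_of_forall_mem_sphere_norm_le l hρ hdiff hsphere).trans_eq ?_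
  ring

end Restriction

section RealAmplitudes

variable {V₁ V₂ : ℝ → ℝ} {z : ℂ}

namespace IsAmplitude

variable {u u' v v' : ℝ → ℂ × ℂ}

theorem add (hu : IsAmplitude V₁ V₂ z u u') (hv : IsAmplitude V₁ V₂ z v v') :
    IsAmplitude V₁ V₂ z (fun x => u x + v x) (fun x => u' x + v' x) where
  hasDerivAt x := (hu.hasDerivAt x).add (hv.hasDerivAt x)
  hasDerivAt_deriv x := ((hu.hasDerivAt_deriv x).add (hv.hasDerivAt_deriv x)).congr_deriv <| by
    ext <;> simp [potentialAction] <;> ring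

theorem const_smul (hu : IsAmplitude V₁ V₂ z u u') (c : ℝ) :
    IsAmplitude V₁ V₂ z (fun x => c • u x) (fun x => c • u' x) where
  hasDerivAt x := (hu.hasDerivAt x).const_smul c
  hasDerivAt_deriv x := ((hu.hasDerivAt_deriv x).const_smul c).congr_deriv <| by
    ext <;> simp [potentialAction] <;> ring

end IsAmplitude

theorem hasDerivAt_cexp_I_mul_smul {E : Type*} [NormedAddCommGroup E] [NormedSpace ℂ E]
    {u : ℝ → E} {u' : E} {x : ℝ} (z : ℂ) (hu : HasDerivAt u u' x) :
    HasDerivAt (fun x : ℝ => Complex.exp (Complex.I * z * x) • u x)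
      (Complex.exp (Complex.I * z * x) • (u' + (Complex.I * z) • u x)) x := by
  have hexp : HasDerivAt (fun x : ℝ => Complex.exp (Complex.I * z * x))
      (Complex.exp (Complex.I * z * x) * (Complex.I * z * 1)) x :=
    (Complex.ofRealCLM.hasDerivAt.const_mul (Complex.I * z)).cexp
  refine (hexp.smul hu).congr_deriv ?_
  module

theorem iteratedDeriv_two_of_hasDerivAt {E : Type*} [NormedAddCommGroup E] [NormedSpace ℝ E]
    {f f' f'' : ℝ → E} (hf : ∀ x, HasDerivAt f (f' x) x) (hf' : ∀ x, HasDerivAt f' (f'' x) x)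
    (x : ℝ) : iteratedDeriv 2 f x = f'' x := by
  rw [iteratedDeriv_succ, iteratedDeriv_one, funext fun x => (hf x).deriv, (hf' x).deriv]

theorem IsAmplitude.isSolution {u u' : ℝ → ℂ × ℂ} (hu : IsAmplitude V₁ V₂ z u u')
    (hsmooth : ContDiff ℝ 2 u) :
    IsSolution V₁ V₂ (1 + z ^ 2) fun x => Complex.exp (Complex.I * z * x) • u x := by
  have hexp : ContDiff ℝ 2 fun x : ℝ => Complex.exp (Complex.I * z * x) :=
    (contDiff_const.mul Complex.ofRealCLM.contDiff).cexp
  refine ⟨hexp.smul hsmooth, fun x => ?_⟩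
  have hf (x : ℝ) := hasDerivAt_cexp_I_mul_smul z (hu.hasDerivAt x)
  have hf' (x : ℝ) := hasDerivAt_cexp_I_mul_smul z
    ((hu.hasDerivAt_deriv x).add ((hu.hasDerivAt x).const_smul (Complex.I * z)))
  have hI := Complex.I_sq
  refine Prod.ext ?_ ?_
  · simp only [matH]
    rw [iteratedDeriv_two_of_hasDerivAt (fun x => (hf x).fst) fun x => (hf' x).fst]
    simp [potentialAction]
    linear_combination (-Complex.exp (Complex.I * z * x) * z ^ 2 * (u x).1) * hI
  · simp only [matH]
    rw [iteratedDeriv_two_of_hasDerivAt (fun x => (hf x).snd) fun x => (hf' x).snd]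
    simp [potentialAction]
    linear_combination (Complex.exp (Complex.I * z * x) * z ^ 2 * (u x).2) * hI

theorem IsSolution.conj2 {f : ℝ → ℂ × ℂ} (hf : IsSolution V₁ V₂ z f) :
    IsSolution V₁ V₂ (starRingEnd ℂ z) (conj2 f) := by
  have hstar (g : ℝ → ℂ) (x : ℝ) :
      iteratedDeriv 2 (fun y => starRingEnd ℂ (g y)) x = starRingEnd ℂ (iteratedDeriv 2 g x) := by
    simp only [starRingEnd_apply, iteratedDeriv_succ, iteratedDeriv_zero, deriv.star']
  refine ⟨(Complex.conjCLE.contDiff.comp hf.1.fst).prodMk (Complex.conjCLE.contDiff.comp hf.1.snd),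
    fun x => ?_⟩
  have hconj := congrArg (Prod.map (starRingEnd ℂ) (starRingEnd ℂ)) (hf.2 x)
  simpa [matH, _root_.conj2, hstar, Prod.ext_iff] using hconj

/-- Amplitudes of Jost solutions for the real parameters `t ∈ U`: `e^{itx} w(x, t)` solves
`ℋf = (1 + t²) f`, and `∂ₓ^k (w - (1, 0))` is a symbol of order `k - 1` in `t` for `x ≥ x₀`. -/
structure RealJostFamily (γ x₀ : ℝ) (V₁ V₂ : ℝ → ℝ) (U : Set ℝ) (w : ℝ → ℝ → ℂ × ℂ) : Prop where
  isAmplitude : ∀ t ∈ U, ∃ u', IsAmplitude V₁ V₂ t (fun x => w x t) u'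
  contDiffOn : ContDiffOn ℝ ∞ (fun p : ℝ × ℝ => w p.1 p.2) (Prod.snd ⁻¹' U)
  realSymbol : ∀ k : ℕ, RealSymbol U x₀ γ (k - 1) fun x t =>
    iteratedDeriv k (fun x => w x t - (1, 0)) x

variable {γ x₀ x₁ ρ : ℝ} {Ω : Set ℂ} {U U' : Set ℝ} {w w₀ w₁ : ℝ → ℝ → ℂ × ℂ}

theorem JostFamily.realJostFamily {w : ℝ → ℂ → ℂ × ℂ} (hw : JostFamily γ x₀ V₁ V₂ Ω w)
    (hΩ : IsOpen Ω) (hρ : 0 < ρ) (hρ' : ρ ≤ 1 / 4)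
    (hU : ∀ t ∈ U, Metric.closedBall (t : ℂ) ρ ⊆ Ω) :
    RealJostFamily γ x₀ V₁ V₂ U fun x t => w x t := by
  have hmem (t : ℝ) (ht : t ∈ U) : (t : ℂ) ∈ Ω := hU t ht (Metric.mem_closedBall_self hρ.le)
  refine ⟨fun t ht => hw.isAmplitude t (hmem t ht), ?_, fun k => ?_⟩
  · have hsub : ContDiffOn ℝ ∞ (fun p : ℝ × ℝ => w p.1 p.2 - (1, 0)) (Prod.snd ⁻¹' U) :=
      contDiffOn_infty.2 fun n => ((hw.symbolFamily n).cnFamily.contDiffOn_ofReal hΩ).mono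
        fun p hp => hmem p.2 hp
    simpa only [sub_add_cancel] using hsub.add (contDiffOn_const (c := (1, 0)))
  · rw [sub_eq_neg_add]
    exact (hw.symbolFamily k).iteratedDeriv.realSymbol hΩ hρ hρ' hU

namespace RealJostFamily

theorem mono (hw : RealJostFamily γ x₀ V₁ V₂ U w) (hU : U' ⊆ U) :
    RealJostFamily γ x₀ V₁ V₂ U' w :=
  ⟨fun t ht => hw.1 t (hU ht), hw.2.mono (preimage_mono hU), fun k => (hw.3 k).mono hU le_rfl⟩

theorem congr (hw : RealJostFamily γ x₀ V₁ V₂ U w) (hU : IsOpen U)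
    (h : ∀ x, ∀ t ∈ U, w₁ x t = w x t) : RealJostFamily γ x₀ V₁ V₂ U w₁ where
  isAmplitude t ht := by simpa only [h _ t ht] using hw.isAmplitude t ht
  contDiffOn := hw.contDiffOn.congr fun p hp => h p.1 p.2 hp
  realSymbol k := (hw.realSymbol k).congr hU fun x t ht => by simp only [h _ t ht]

theorem contDiff (hw : RealJostFamily γ x₀ V₁ V₂ U w) {t : ℝ} (ht : t ∈ U) :
    ContDiff ℝ ∞ fun x => w x t :=
  contDiffOn_univ.1 (hw.contDiffOn.comp (f := fun x : ℝ => (x, t)) (by fun_prop) fun _ _ => ht)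

theorem iteratedDeriv_glue (hw₀ : RealJostFamily γ x₀ V₁ V₂ univ w₀)
    (hw₁ : RealJostFamily γ x₁ V₁ V₂ U w₁) {ψ : ℝ → ℝ} (hsupp : tsupport ψ ⊆ U) (k : ℕ)
    (x t : ℝ) :
    iteratedDeriv k (fun x => w₀ x t + ψ t • (w₁ x t - w₀ x t) - (1, 0)) x =
      iteratedDeriv k (fun x => w₀ x t - (1, 0)) x + ψ t •
        (iteratedDeriv k (fun x => w₁ x t - (1, 0)) x +
          -iteratedDeriv k (fun x => w₀ x t - (1, 0)) x) := by
  by_cases hψ : ψ t = 0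
  · simp only [hψ, zero_smul, add_zero]
  have hsmooth {v : ℝ → ℂ × ℂ} (hv : ContDiff ℝ ∞ v) :
      ContDiffAt ℝ k (fun x => v x - (1, 0)) x :=
    (hv.sub contDiff_const).contDiffAt.of_le (by exact_mod_cast le_top)
  have h₀ := hsmooth (hw₀.contDiff (mem_univ t))
  have h₁ := hsmooth (hw₁.contDiff (hsupp (subset_tsupport ψ hψ)))
  rw [← iteratedDeriv_fun_neg, ← iteratedDeriv_fun_add h₁ h₀.neg,
    ← iteratedDeriv_fun_const_smul_field,
    ← iteratedDeriv_fun_add h₀ ((h₁.add h₀.neg).const_smul (ψ t))]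
  congr 1 with x : 1
  module

/-- The interpolation between the two families solves the equation because it is a pointwise
combination of two solutions for each value of the parameter. -/
theorem glue (hw₀ : RealJostFamily γ x₀ V₁ V₂ univ w₀) (hw₁ : RealJostFamily γ x₁ V₁ V₂ U w₁)
    (hx : x₁ ≤ x₀) (hU : IsOpen U) {ψ : ℝ → ℝ} (hψ : ContDiff ℝ ∞ ψ) (hsupp : tsupport ψ ⊆ U)
    (hbound : ∀ i, ∃ M, ∀ t, ‖iteratedDeriv i ψ t‖ ≤ M) :
    RealJostFamily γ x₀ V₁ V₂ univ fun x t => w₀ x t + ψ t • (w₁ x t - w₀ x t) where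
  isAmplitude t _ := by
    obtain ⟨u₀, hu₀⟩ := hw₀.isAmplitude t (mem_univ t)
    by_cases ht : ψ t = 0
    · exact ⟨u₀, by simpa only [ht, zero_smul, add_zero] using hu₀⟩
    · obtain ⟨u₁, hu₁⟩ := hw₁.isAmplitude t (hsupp (subset_tsupport ψ ht))
      have hdiff := (hu₁.add (hu₀.const_smul (-1))).const_smul (ψ t)
      exact ⟨_, by simpa only [neg_one_smul, ← sub_eq_add_neg] using hu₀.add hdiff⟩
  contDiffOn := by
    have hsnd : tsupport (fun p : ℝ × ℝ => ψ p.2) ⊆ Prod.snd ⁻¹' U :=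
      (tsupport_comp_subset_preimage ψ continuous_snd).trans (preimage_mono hsupp)
    refine hw₀.contDiffOn.add (contDiff_smul_of_tsupport_subset (hψ.comp contDiff_snd)
      (hU.preimage continuous_snd) hsnd ?_).contDiffOn
    exact hw₁.contDiffOn.sub (hw₀.mono (subset_univ U)).contDiffOn
  realSymbol k := by
    have hdiff : RealSymbol U x₀ γ (k - 1) fun x t =>
        iteratedDeriv k (fun x => w₁ x t - (1, 0)) x +
          -iteratedDeriv k (fun x => w₀ x t - (1, 0)) x :=
      ((hw₁.realSymbol k).mono subset_rfl hx).add
        ((hw₀.realSymbol k).mono (subset_univ U) le_rfl).neg hU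
    exact ((hw₀.realSymbol k).add (hdiff.cutoff hU hψ hsupp hbound) isOpen_univ).congr isOpen_univ
      fun x t _ => hw₀.iteratedDeriv_glue hw₁ hsupp k x t

end RealJostFamily

theorem exists_realJostFamily (hγ : 0 < γ) (hγ' : γ < √2) (hV₁ : ContDiff ℝ ∞ V₁)
    (hV₂ : ContDiff ℝ ∞ V₂)
    (hdecay : ∀ k, ∃ C, ∀ x, |iteratedDeriv k V₁ x| + |iteratedDeriv k V₂ x| ≤
      C * rexp (-γ * |x|)) :
    ∃ x₀ L, 0 ≤ x₀ ∧ 0 ≤ L ∧ ∃ w, RealJostFamily γ x₀ V₁ V₂ univ w ∧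
      RealJostFamily γ 0 V₁ V₂ {t | L < |t|} w := by
  obtain ⟨x₀, L, hx₀, hL, ⟨w₀, hw₀⟩, w₁, hw₁⟩ := exists_jostFamily_strip hγ hγ' hV₁ hV₂ hdecay
  have hδ := stripWidth_pos hγ hγ'
  have hδ' := stripWidth_le γ
  have hstrip : IsOpen {z : ℂ | |z.im| < stripWidth γ} := isOpen_lt (by fun_prop) continuous_const
  have hstrip' : IsOpen {z : ℂ | |z.im| < stripWidth γ ∧ L < |z.re|} :=
    hstrip.inter (isOpen_lt continuous_const (by fun_prop) : IsOpen {z : ℂ | L < |z.re|})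
  have him {t : ℝ} {z : ℂ} (hz : z ∈ Metric.closedBall (t : ℂ) (stripWidth γ / 2)) :
      |z.im| < stripWidth γ := by
    have := (Complex.abs_im_le_norm _).trans (mem_closedBall_iff_norm.1 hz)
    rw [Complex.sub_im, Complex.ofReal_im, sub_zero] at this
    linarith
  have hre {t : ℝ} {z : ℂ} (hz : z ∈ Metric.closedBall (t : ℂ) (stripWidth γ / 2)) :
      |t| - 1 ≤ |z.re| := by
    have := (Complex.abs_re_le_norm _).trans (mem_closedBall_iff_norm.1 hz)
    rw [Complex.sub_re, Complex.ofReal_re] at this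
    linarith [abs_sub_abs_le_abs_sub t z.re, abs_sub_comm t z.re]
  have hw₀' := hw₀.realJostFamily (U := univ) hstrip (half_pos hδ) (by linarith)
    fun t _ z hz => him hz
  have hw₁' := hw₁.realJostFamily (U := {t | L + 1 < |t|}) hstrip' (half_pos hδ) (by linarith)
    fun t (ht : L + 1 < |t|) z hz => ⟨him hz, by linarith [hre hz]⟩
  have hopen (a : ℝ) : IsOpen {t : ℝ | a < |t|} := isOpen_lt continuous_const continuous_abs
  obtain ⟨ψ, hψ, hbound, hsupp, hone⟩ :=
    exists_contDiff_cutoff (add_nonneg hL zero_le_one) (lt_add_one (L + 1))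
  refine ⟨x₀, L + 1 + 1, hx₀, by positivity, _,
    hw₀'.glue hw₁' hx₀ (hopen _) hψ hsupp hbound,
    (hw₁'.mono fun t (ht : L + 1 + 1 < |t|) => (lt_add_one (L + 1)).trans ht).congr (hopen _)
      fun x t ht => ?_⟩
  rw [hone t (le_of_lt ht), one_smul, add_sub_cancel]

end RealAmplitudes

theorem norm_le_mul_one_add_pow_mul {E : Type*} [NormedAddCommGroup E] {a : E} {b c x : ℝ}
    {l : ℕ} (hx : 0 ≤ x) (ha : ‖a‖ ≤ b * c) : ‖a‖ ≤ b * (1 + x) ^ l * c := by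
  rw [mul_assoc, mul_left_comm]
  exact ha.trans (le_mul_of_one_le_left ((norm_nonneg a).trans ha)
    (one_le_pow₀ (le_add_of_nonneg_right hx)))

theorem stmt_5_general {γ : ℝ} {V₁ V₂ : ℝ → ℝ} (hγ : 0 < γ) (hγ' : γ < √2)
    (hV₁ : ContDiff ℝ ∞ V₁) (hV₂ : ContDiff ℝ ∞ V₂)
    (hdecay : ∀ k : ℕ, ∃ C : ℝ, ∀ x : ℝ,
      |iteratedDeriv k V₁ x| + |iteratedDeriv k V₂ x| ≤ C * rexp (-γ * |x|)) :
    ∃ x₀ lam₀ : ℝ, 0 ≤ x₀ ∧ 0 ≤ lam₀ ∧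
      ∃ f₁ : ℝ → ℝ → ℂ × ℂ,
        ContDiff ℝ ∞ (fun p : ℝ × ℝ => f₁ p.1 p.2) ∧
        (∀ lam : ℝ,
          IsSolution V₁ V₂ ((1 + lam ^ 2 : ℝ) : ℂ) (fun x => f₁ x lam) ∧
          IsSolution V₁ V₂ ((1 + lam ^ 2 : ℝ) : ℂ) (conj2 fun x => f₁ x lam)) ∧
        ∀ k l : ℕ, ∃ C : ℝ, ∀ lam x : ℝ, (x₀ ≤ x ∨ lam₀ ≤ |lam| ∧ 0 ≤ x) →
          ‖iteratedDeriv l (fun m : ℝ => iteratedDeriv k (fun y : ℝ =>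
              Complex.exp (-Complex.I * m * y) • f₁ y m - (1, 0)) x) lam‖ ≤
            C * mu lam ^ ((k : ℝ) - 1) * rexp (-γ * x) := by
  obtain ⟨x₀, L, hx₀, hL, w, hw, hw'⟩ := exists_realJostFamily hγ hγ' hV₁ hV₂ hdecay
  have hsolution (t : ℝ) : IsSolution V₁ V₂ ((1 + t ^ 2 : ℝ) : ℂ)
      fun x => Complex.exp (Complex.I * t * x) • w x t := by
    obtain ⟨u', hu'⟩ := hw.isAmplitude t (mem_univ t)
    exact_mod_cast hu'.isSolution (contDiff_infty.1 (hw.contDiff (mem_univ t)) 2)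
  have hexp : ContDiff ℝ ∞ fun p : ℝ × ℝ => Complex.exp (Complex.I * p.2 * p.1) :=
    ((contDiff_const.mul (Complex.ofRealCLM.contDiff.comp contDiff_snd)).mul
      (Complex.ofRealCLM.contDiff.comp contDiff_fst)).cexp
  have hphase (x t : ℝ) :
      Complex.exp (-Complex.I * t * x) • Complex.exp (Complex.I * t * x) • w x t = w x t := by
    rw [smul_smul, ← Complex.exp_add, neg_mul, neg_mul, neg_add_cancel, Complex.exp_zero, one_smul]
  refine ⟨x₀, L + 1, hx₀, by positivity, fun x t => Complex.exp (Complex.I * t * x) • w x t,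
    hexp.smul (contDiffOn_univ.1 hw.contDiffOn),
    fun t => ⟨hsolution t, by simpa only [Complex.conj_ofReal] using (hsolution t).conj2⟩,
    fun k l => ?_⟩
  obtain ⟨C, hC⟩ := (hw.realSymbol k).bound l
  obtain ⟨D, hD⟩ := (hw'.realSymbol k).bound l
  refine ⟨max C D, fun t x hx => ?_⟩
  have hμ := mu_pos t
  simp only [hphase, mul_assoc (max C D)]
  rcases hx with hx | ⟨ht, hx⟩
  · exact (hC t (mem_univ t) x hx).trans (by gcongr; exact le_max_left C D)
  · exact (hD t (show L < |t| by linarith) x hx).trans (by gcongr; exact le_max_right C D)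

theorem stmt_5 (γ : ℝ) (V₁ V₂ : ℝ → ℝ) (hV : PotentialHyp γ V₁ V₂) :
    ∃ x0 lam0 : ℝ, 0 ≤ x0 ∧ 0 ≤ lam0 ∧
      ∃ f₁ : ℝ → ℝ → ℂ × ℂ,
        ContDiff ℝ (⊤ : ℕ∞) (fun p : ℝ × ℝ => f₁ p.1 p.2) ∧
        (∀ lam : ℝ,
          IsSolution V₁ V₂ (((1 + lam ^ 2 : ℝ) : ℂ)) (fun x => f₁ x lam) ∧
          IsSolution V₁ V₂ (((1 + lam ^ 2 : ℝ) : ℂ)) (conj2 (fun x => f₁ x lam))) ∧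
        (∀ k l : ℕ, ∃ C : ℝ,
          (∀ lam x : ℝ, x0 ≤ x →
            ‖iteratedDeriv l
                (fun m : ℝ => iteratedDeriv k
                  (fun y : ℝ => Complex.exp (-Complex.I * (m : ℂ) * (y : ℂ)) • f₁ y m
                    - ((1 : ℂ), (0 : ℂ))) x) lam‖
              ≤ C * mu lam ^ ((k : ℝ) - 1) * (1 + x) ^ l * Real.exp (-γ * x)) ∧
          (∀ lam x : ℝ, lam0 ≤ |lam| → 0 ≤ x →
            ‖iteratedDeriv l
                (fun m : ℝ => iteratedDeriv k
                  (fun y : ℝ => Complex.exp (-Complex.I * (m : ℂ) * (y : ℂ)) • f₁ y m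
                    - ((1 : ℂ), (0 : ℂ))) x) lam‖
              ≤ C * mu lam ^ ((k : ℝ) - 1) * (1 + x) ^ l * Real.exp (-γ * x))) := by
  obtain ⟨hγ, hγ', hV₁, hV₂, -, -, hdecay⟩ := hV
  obtain ⟨x₀, lam₀, hx₀, hlam₀, f₁, hsmooth, hsol, hbound⟩ :=
    stmt_5_general hγ (hγ'.trans Real.one_lt_sqrt_two) hV₁ hV₂ hdecay
  refine ⟨x₀, lam₀, hx₀, hlam₀, f₁, hsmooth, hsol, fun k l => (hbound k l).imp fun C hC =>
    ⟨fun lam x hx => ?_, fun lam x hlam hx => ?_⟩⟩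
  · exact norm_le_mul_one_add_pow_mul (hx₀.trans hx) (hC lam x (.inl hx))
  · exact norm_le_mul_one_add_pow_mul hx (hC lam x (.inr ⟨hlam, hx⟩))
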